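/- arXiv:1902.08064 — 2 statements merged into one kernel-verified Lean document; each statement's English description precedes it below -/
import Mathlib

section
/- Assume λ, μ, ν, b ∈ ℂ and ℓ, m ∈ ℕ satisfy ℓ + m even, Re λ > −1/2, Re μ > −1/2, Re ν > 0, and Re b > −1. Then (m − ℓ)/2 is an integer and ∫_{−1}^1 ∫_{−1}^1 ∫_0^1 |s − t√y|^{2ν} C_ℓ^λ(s) C_m^μ(t) y^{μ+m/2}(1−y)^b (1−s²)^{λ−1/2} (1−t²)^{μ−1/2} dy ds dt = c · (2λ)_ℓ (2μ)_m (−ν)_{(ℓ+m)/2} Γ(λ+1/2) Γ(μ+1/2) Γ(ν+1/2) Γ(λ+μ+2ν+b+2) Γ(b+1) / (Γ(λ+μ+ν+b+(ℓ+m)/2+2) Γ(λ+ν+(ℓ−m)/2+1) Γ(μ+ν+b−(ℓ−m)/2+2)), where c = π^{1/2} (−1)^{(m−ℓ)/2} / (ℓ! m!). -/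
open MeasureTheory Filter intervalIntegral

/-- The Gegenbauer (ultraspherical) polynomial `C_n^λ(x)`. -/
noncomputable def gegenbauer (l : ℂ) (n : ℕ) (x : ℂ) : ℂ :=
  ∑ k ∈ Finset.range (n / 2 + 1),
    ((-1 : ℂ) ^ k * (ascPochhammer ℂ (n - k)).eval l /
      ((Nat.factorial k : ℂ) * (Nat.factorial (n - 2 * k) : ℂ))) * (2 * x) ^ (n - 2 * k)

noncomputable def Wt (l : ℂ) (s : ℝ) : ℂ := ((1 - s ^ 2 : ℝ) : ℂ) ^ (l - 1 / 2 : ℂ)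

theorem image_sq_Ioo : (fun x : ℝ => x ^ 2) '' Set.Ioo 0 1 = Set.Ioo 0 1 := by
  ext y
  constructor
  · rintro ⟨x, ⟨h0, h1⟩, rfl⟩
    constructor
    · positivity
    · simp only; nlinarith
  · rintro ⟨h0, h1⟩
    refine ⟨Real.sqrt y, ⟨Real.sqrt_pos.2 h0, ?_⟩, Real.sq_sqrt h0.le⟩
    rw [Real.sqrt_lt' one_pos]; simpa using h1

theorem injOn_sq_Ioo : Set.InjOn (fun x : ℝ => x ^ 2) (Set.Ioo 0 1) := by
  intro a ha b hb h
  simp only at h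
  have := ha.1; have := hb.1
  nlinarith [mul_self_eq_mul_self_iff.1 (by nlinarith : a * a = b * b) |>.resolve_right (by linarith)]

theorem beta_half {a c : ℂ} (ha : 0 < a.re) (hc : 0 < c.re) :
    IntegrableOn (fun x : ℝ => (x : ℂ) ^ (2 * a - 1) * ((1 - x ^ 2 : ℝ) : ℂ) ^ (c - 1)) (Set.Ioo 0 1) ∧
    ∫ x in Set.Ioo (0 : ℝ) 1, (x : ℂ) ^ (2 * a - 1) * ((1 - x ^ 2 : ℝ) : ℂ) ^ (c - 1)
      = (1 / 2) * Complex.betaIntegral a c := by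
  set g : ℝ → ℂ := fun x => (x : ℂ) ^ (a - 1) * (1 - (x : ℂ)) ^ (c - 1) with hg
  have hgi : IntegrableOn g (Set.Ioo 0 1) := by
    have := Complex.betaIntegral_convergent ha hc
    rw [intervalIntegrable_iff_integrableOn_Ioo_of_le zero_le_one] at this
    exact this
  have hd : ∀ x ∈ Set.Ioo (0 : ℝ) 1, HasDerivWithinAt (fun x : ℝ => x ^ 2) (2 * x) (Set.Ioo 0 1) x := by
    intro x _
    simpa using (hasDerivAt_pow 2 x).hasDerivWithinAt
  have key : ∀ x ∈ Set.Ioo (0 : ℝ) 1, |2 * x| • g (x ^ 2) =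
      2 * ((x : ℂ) ^ (2 * a - 1) * ((1 - x ^ 2 : ℝ) : ℂ) ^ (c - 1)) := by
    intro x hx
    have hx0 : (x : ℂ) ≠ 0 := by exact_mod_cast hx.1.ne'
    have h2 : ((x ^ 2 : ℝ) : ℂ) ^ (a - 1) * x = (x : ℂ) ^ (2 * a - 1) := by
      rw [pow_two, Complex.ofReal_mul, Complex.mul_cpow_ofReal_nonneg hx.1.le hx.1.le,
        ← Complex.cpow_add _ _ hx0]
      rw [show (2 * a - 1) = (a - 1 + (a - 1)) + 1 by ring, Complex.cpow_add _ 1 hx0, Complex.cpow_one]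
    rw [abs_of_pos (by linarith [hx.1]), hg]
    simp only [Complex.real_smul, ← h2]
    push_cast; ring
  have himg := integrableOn_image_iff_integrableOn_abs_deriv_smul measurableSet_Ioo hd injOn_sq_Ioo g
  have hint := integral_image_eq_integral_abs_deriv_smul measurableSet_Ioo hd injOn_sq_Ioo g
  rw [image_sq_Ioo] at himg hint
  rw [integrableOn_congr_fun key measurableSet_Ioo] at himg
  rw [setIntegral_congr_fun measurableSet_Ioo key] at hint
  have h1 := himg.1 hgi
  refine ⟨?_, ?_⟩
  · have := h1.const_mul (1 / 2 : ℂ)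
    refine this.congr (Eventually.of_forall fun x => ?_)
    simp only; ring
  · rw [MeasureTheory.integral_const_mul] at hint
    rw [Complex.betaIntegral, intervalIntegral.integral_of_le zero_le_one, integral_Ioc_eq_integral_Ioo,
      hint]
    ring

theorem beta_abs {a c : ℂ} (ha : 0 < a.re) (hc : 0 < c.re) :
    IntervalIntegrable (fun x : ℝ => ((|x| : ℝ) : ℂ) ^ (2 * a - 1) * ((1 - x ^ 2 : ℝ) : ℂ) ^ (c - 1)) volume (-1) 1 ∧
    ∫ x in (-1 : ℝ)..1, ((|x| : ℝ) : ℂ) ^ (2 * a - 1) * ((1 - x ^ 2 : ℝ) : ℂ) ^ (c - 1)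
      = Complex.betaIntegral a c := by
  obtain ⟨h1, h2⟩ := beta_half ha hc
  set G : ℝ → ℂ := (fun x : ℝ => ((|x| : ℝ) : ℂ) ^ (2 * a - 1) * ((1 - x ^ 2 : ℝ) : ℂ) ^ (c - 1)) with hG
  have hpos : IntervalIntegrable G volume 0 1 := by
    rw [intervalIntegrable_iff_integrableOn_Ioo_of_le zero_le_one]
    refine h1.congr_fun (fun x hx => ?_) measurableSet_Ioo
    simp only [hG, abs_of_pos hx.1]
  have hposI : ∫ x in (0 : ℝ)..1, G x = (1 / 2) * Complex.betaIntegral a c := by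
    rw [← h2, intervalIntegral.integral_of_le zero_le_one, integral_Ioc_eq_integral_Ioo]
    refine setIntegral_congr_fun measurableSet_Ioo (fun x hx => ?_)
    simp only [hG, abs_of_pos hx.1]
  have heven : ∀ x, G (-x) = G x := by intro x; simp [hG]
  have hneg : IntervalIntegrable G volume (-1) 0 := by
    have h := IntervalIntegrable.symm ((IntervalIntegrable.iff_comp_neg (f := G)).1 hpos)
    simp only [heven, neg_zero] at h
    exact h
  have hnegI : ∫ x in (-1 : ℝ)..0, G x = (1 / 2) * Complex.betaIntegral a c := by
    have h := intervalIntegral.integral_comp_neg (a := 0) (b := 1) G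
    simp only [heven, neg_zero] at h
    rw [← h, hposI]
  refine ⟨hneg.trans hpos, ?_⟩
  rw [← integral_add_adjacent_intervals hneg hpos, hnegI, hposI]; ring

theorem Wt_int {l : ℂ} (hl : -(1 / 2 : ℝ) < l.re) : IntervalIntegrable (Wt l) volume (-1) 1 := by
  have h := (beta_abs (a := 1 / 2) (c := l + 1 / 2) (by norm_num) (by simp; linarith)).1
  refine h.congr (fun x _ => ?_)
  simp only [Wt]
  rw [show (2 * (1 / 2) - 1 : ℂ) = 0 by norm_num, Complex.cpow_zero, one_mul]
  congr 1; ring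

theorem moment_even {l : ℂ} (hl : -(1 / 2 : ℝ) < l.re) (q : ℕ) :
    ∫ x in (-1 : ℝ)..1, (x : ℂ) ^ (2 * q) * Wt l x =
      Complex.Gamma (q + 1 / 2) * Complex.Gamma (l + 1 / 2) / Complex.Gamma (l + q + 1) := by
  have hq : 0 < ((q : ℂ) + 1 / 2).re := by simp; positivity
  have hc : 0 < (l + 1 / 2).re := by simp; linarith
  have h := (beta_abs hq hc).2
  rw [Complex.betaIntegral_eq_Gamma_mul_div _ _ hq hc] at h
  rw [show l + q + 1 = (q : ℂ) + 1 / 2 + (l + 1 / 2) by ring, ← h]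
  refine integral_congr (fun x _ => ?_)
  simp only [Wt]
  rw [show (2 * ((q : ℂ) + 1 / 2) - 1 : ℂ) = ((2 * q : ℕ) : ℂ) by push_cast; ring, Complex.cpow_natCast,
    show l + 1 / 2 - 1 = l - 1 / 2 by ring]
  congr 1
  rw [pow_mul, pow_mul, ← Complex.ofReal_pow, ← Complex.ofReal_pow |x|, sq_abs]

theorem moment_odd {l : ℂ} (q : ℕ) :
    ∫ x in (-1 : ℝ)..1, (x : ℂ) ^ (2 * q + 1) * Wt l x = 0 := by
  have h := intervalIntegral.integral_comp_neg (a := -1) (b := 1) (fun x : ℝ => (x : ℂ) ^ (2 * q + 1) * Wt l x)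
  have h2 : ∀ x : ℝ, ((-x : ℝ) : ℂ) ^ (2 * q + 1) * Wt l (-x) = - ((x : ℂ) ^ (2 * q + 1) * Wt l x) := by
    intro x
    simp only [Wt, neg_sq, Complex.ofReal_neg]
    rw [Odd.neg_pow ⟨q, rfl⟩]; ring
  simp only [h2, neg_neg, intervalIntegral.integral_neg] at h
  exact self_eq_neg.1 h.symm


theorem Wt_succ {l : ℂ} (hl : -(1 / 2 : ℝ) < l.re) (x : ℝ) :
    Wt (l + 1) x = (1 - (x : ℂ) ^ 2) * Wt l x := by
  have hne : l + 1 / 2 ≠ 0 := by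
    intro h
    have := congrArg Complex.re h
    simp at this; linarith
  simp only [Wt]
  rw [show (1 - (x : ℂ) ^ 2) = ((1 - x ^ 2 : ℝ) : ℂ) by push_cast; ring]
  by_cases h : ((1 - x ^ 2 : ℝ) : ℂ) = 0
  · rw [h, zero_mul, show l + 1 - 1 / 2 = l + 1 / 2 by ring, Complex.zero_cpow hne]
  · rw [show l + 1 - 1 / 2 = (l - 1 / 2) + 1 by ring, Complex.cpow_add _ _ h, Complex.cpow_one, mul_comm]

theorem Wt_continuous {l : ℂ} (hl : (1 / 2 : ℝ) < l.re) : Continuous (Wt l) := by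
  unfold Wt
  have h := Complex.continuous_ofReal_cpow_const (y := l - 1 / 2) (by simp; linarith)
  exact h.comp (by fun_prop : Continuous fun s : ℝ => 1 - s ^ 2)

theorem cont_mul_Wt_int {l : ℂ} (hl : -(1 / 2 : ℝ) < l.re) {f : ℝ → ℂ} (hf : Continuous f) :
    IntervalIntegrable (fun x => f x * Wt l x) volume (-1) 1 :=
  (Wt_int hl).continuousOn_mul hf.continuousOn

theorem W_ibp {l : ℂ} (hl : -(1 / 2 : ℝ) < l.re) {f f' : ℝ → ℂ}
    (hd : ∀ x, HasDerivAt f (f' x) x) (hc : Continuous f') :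
    ∫ x in (-1 : ℝ)..1, f' x * Wt (l + 1) x =
      ∫ x in (-1 : ℝ)..1, ((2 * l + 1) * x * f x) * Wt l x := by
  have hfc : Continuous f := continuous_iff_continuousAt.2 fun x => (hd x).continuousAt
  have hl1 : -(1 / 2 : ℝ) < (l + 1).re := by simp; linarith
  have hne : l + 1 / 2 ≠ 0 := by
    intro h
    have := congrArg Complex.re h
    simp at this; linarith
  have i1 := cont_mul_Wt_int hl1 hc
  have i2 : IntervalIntegrable (fun x : ℝ => ((2 * l + 1) * x * f x) * Wt l x) volume (-1) 1 :=
    cont_mul_Wt_int hl (by fun_prop)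
  have h := integral_eq_sub_of_hasDerivAt_of_le (a := -1) (b := 1) (f := fun x => f x * Wt (l + 1) x)
    (f' := fun x => f' x * Wt (l + 1) x - ((2 * l + 1) * x * f x) * Wt l x) (by norm_num)
    (hfc.mul (Wt_continuous (by simp; linarith))).continuousOn ?_ (i1.sub i2)
  · rw [intervalIntegral.integral_sub i1 i2] at h
    have e : ∀ x : ℝ, 1 - x ^ 2 = 0 → Wt (l + 1) x = 0 := by
      intro x hx
      simp only [Wt, hx]
      rw [show l + 1 - 1 / 2 = l + 1 / 2 by ring, Complex.ofReal_zero, Complex.zero_cpow hne]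
    rw [e 1 (by norm_num), e (-1) (by norm_num)] at h
    simpa [sub_eq_zero] using h
  · intro x hx
    have hx2 : 1 - x ^ 2 ≠ 0 := by nlinarith [hx.1, hx.2]
    have h1 : HasDerivAt (fun y : ℝ => 1 - y ^ 2) (-(2 * x)) x := by
      simpa using (hasDerivAt_pow 2 x).const_sub 1
    have h2 := hasDerivAt_ofReal_cpow_const (x := 1 - x ^ 2) (r := l + 1 - 1 / 2) hx2
      (by rw [show l + 1 - 1 / 2 = l + 1 / 2 by ring]; exact hne)
    have h3 := h2.scomp x h1
    have h4 := (hd x).mul h3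
    convert! h4 using 1
    simp only [Wt, Function.comp, Complex.real_smul]
    rw [show l + 1 - 1 / 2 - 1 = l - 1 / 2 by ring]
    push_cast
    ring

noncomputable def Qp : ℕ → ℂ → Polynomial ℂ
  | 0, _ => 1
  | n + 1, l => Polynomial.C (2 * l + 1) * Polynomial.X * Qp n (l + 1)
      - (1 - Polynomial.X ^ 2) * Polynomial.derivative (Qp n (l + 1))

theorem hasDerivAt_polyC (p : Polynomial ℂ) (x : ℝ) :
    HasDerivAt (fun x : ℝ => p.eval (x : ℂ)) ((Polynomial.derivative p).eval (x : ℂ)) x :=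
  (p.hasDerivAt (x : ℂ)).comp_ofReal

theorem cont_polyC (p : Polynomial ℂ) : Continuous (fun x : ℝ => p.eval (x : ℂ)) :=
  p.continuous.comp Complex.continuous_ofReal

theorem Q_ibp (n : ℕ) : ∀ (l : ℂ) (F : ℕ → ℝ → ℂ), -(1 / 2 : ℝ) < l.re →
    (∀ j < n, ∀ x, HasDerivAt (F j) (F (j + 1) x) x) → (∀ j ≤ n, Continuous (F j)) →
    ∫ x in (-1 : ℝ)..1, F 0 x * (Qp n l).eval (x : ℂ) * Wt l x =
      ∫ x in (-1 : ℝ)..1, F n x * Wt (l + n) x := by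
  induction n with
  | zero => intro l F hl _ _; simp [Qp]
  | succ n ih =>
    intro l F hl hd hc
    have hl1 : -(1 / 2 : ℝ) < (l + 1).re := by simp; linarith
    have h := ih (l + 1) (fun j => F (j + 1)) hl1 (fun j hj => hd (j + 1) (by omega))
      (fun j hj => hc (j + 1) (by omega))
    simp only [zero_add] at h
    rw [show l + ((n + 1 : ℕ) : ℂ) = l + 1 + n by push_cast; ring, ← h]
    have c0 := hc 0 (by omega)
    have c1 := hc 1 (by omega)
    have cQ := cont_polyC (Qp n (l + 1))
    have cQ' := cont_polyC (Polynomial.derivative (Qp n (l + 1)))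
    have hw := W_ibp hl (f := fun x => F 0 x * (Qp n (l + 1)).eval (x : ℂ))
      (f' := fun x => F 1 x * (Qp n (l + 1)).eval (x : ℂ) +
        F 0 x * (Polynomial.derivative (Qp n (l + 1))).eval (x : ℂ))
      (fun x => (hd 0 (by omega) x).mul (hasDerivAt_polyC _ x)) (by fun_prop)
    have i1 : IntervalIntegrable (fun x : ℝ => F 1 x * (Qp n (l + 1)).eval (x : ℂ) * Wt (l + 1) x) volume (-1) 1 :=
      cont_mul_Wt_int hl1 (c1.mul cQ)
    have i2 : IntervalIntegrable (fun x : ℝ => F 0 x * (Polynomial.derivative (Qp n (l + 1))).eval (x : ℂ) * Wt (l + 1) x)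
      volume (-1) 1 := cont_mul_Wt_int hl1 (c0.mul cQ')
    have e0 : ∀ x : ℝ, (F 1 x * (Qp n (l + 1)).eval (x : ℂ) +
        F 0 x * (Polynomial.derivative (Qp n (l + 1))).eval (x : ℂ)) * Wt (l + 1) x =
        F 1 x * (Qp n (l + 1)).eval (x : ℂ) * Wt (l + 1) x +
        F 0 x * (Polynomial.derivative (Qp n (l + 1))).eval (x : ℂ) * Wt (l + 1) x := fun x => add_mul _ _ _
    simp only [e0] at hw
    rw [intervalIntegral.integral_add i1 i2] at hw
    rw [← eq_sub_iff_add_eq] at hw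
    rw [hw, ← intervalIntegral.integral_sub]
    · refine integral_congr (fun x _ => ?_)
      simp only [Qp, Polynomial.eval_sub, Polynomial.eval_mul, Polynomial.eval_C, Polynomial.eval_X,
        Polynomial.eval_pow, Polynomial.eval_one, Wt_succ hl]
      ring
    · exact cont_mul_Wt_int hl (by fun_prop)
    · exact i2

noncomputable def cc : ℕ → ℂ → ℂ
  | 0, _ => 1
  | n + 1, l => 2 * l / ((n + 1) * (n + 1 + 2 * l)) * cc n (l + 1)

theorem cc_eq (n : ℕ) : ∀ (l : ℂ), -(1 / 2 : ℝ) < l.re →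
    cc n l * (2 ^ n * n.factorial * Complex.Gamma (l + n + 1 / 2)) =
      (ascPochhammer ℂ n).eval (2 * l) * Complex.Gamma (l + 1 / 2) := by
  induction n with
  | zero => intro l _; simp [cc]
  | succ n ih =>
    intro l hl
    have hl1 : -(1 / 2 : ℝ) < (l + 1).re := by simp; linarith
    have h := ih (l + 1) hl1
    have e1 : (ascPochhammer ℂ (n + 2)).eval (2 * l) =
      2 * l * ((2 * l + 1) * (ascPochhammer ℂ n).eval (2 * (l + 1))) := by
      rw [ascPochhammer_succ_left, Polynomial.eval_mul, Polynomial.eval_X, Polynomial.eval_comp,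
        ascPochhammer_succ_left, Polynomial.eval_mul, Polynomial.eval_X, Polynomial.eval_comp]
      simp only [Polynomial.eval_add, Polynomial.eval_X, Polynomial.eval_one]
      congr 3; ring
    rw [ascPochhammer_succ_eval] at e1
    have hne : (n + 1 + 2 * l) ≠ 0 := by
      intro h
      have := congrArg Complex.re h
      simp at this
      have : (0 : ℝ) ≤ n := n.cast_nonneg
      linarith
    have hn1 : ((n : ℂ) + 1) ≠ 0 := by exact_mod_cast n.succ_ne_zero
    have hg : Complex.Gamma (l + 1 + 1 / 2) = (l + 1 / 2) * Complex.Gamma (l + 1 / 2) := by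
      rw [show l + 1 + 1 / 2 = (l + 1 / 2) + 1 by ring, Complex.Gamma_add_one]
      intro h
      have := congrArg Complex.re h
      simp at this; linarith
    rw [hg] at h
    rw [show l + ((n + 1 : ℕ) : ℂ) + 1 / 2 = l + 1 + n + 1 / 2 by push_cast; ring, cc, Nat.factorial_succ]
    apply mul_left_cancel₀ hne
    push_cast at e1 ⊢
    have : (n + 1 + 2 * l) * (2 * l / ((n + 1) * (n + 1 + 2 * l)) * cc n (l + 1) * (2 ^ (n + 1) * ((n + 1) * n.factorial) * Complex.Gamma (l + 1 + n + 1 / 2)))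
      = 4 * l * (cc n (l + 1) * (2 ^ n * n.factorial * Complex.Gamma (l + 1 + n + 1 / 2))) := by
      field_simp; ring
    rw [this, h]
    linear_combination (-Complex.Gamma (l + 1 / 2)) * e1


noncomputable def gS (l : ℂ) (n : ℕ) (z : ℂ) (k : ℕ) : ℂ :=
  if 2 * k ≤ n + 1 then ((-1 : ℂ) ^ k * (ascPochhammer ℂ (n + 1 - k)).eval l /
      ((Nat.factorial k : ℂ) * (Nat.factorial (n + 1 - 2 * k) : ℂ))) * z ^ (n + 1 - 2 * k) else 0

theorem gS_step (l : ℂ) (n k : ℕ) (x : ℂ) (hk : 2 * k ≤ n) :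
    2 * l * ((2 * l + 1) * x * (((-1 : ℂ) ^ k * (ascPochhammer ℂ (n - k)).eval (l + 1) /
      ((Nat.factorial k : ℂ) * (Nat.factorial (n - 2 * k) : ℂ))) * (2 * x) ^ (n - 2 * k))
      - (1 - x ^ 2) * (((-1 : ℂ) ^ k * (ascPochhammer ℂ (n - k)).eval (l + 1) /
      ((Nat.factorial k : ℂ) * (Nat.factorial (n - 2 * k) : ℂ))) * (((n - 2 * k : ℕ) : ℂ) * (2 * x) ^ (n - 2 * k - 1) * 2)))
    = (2 * l + (n + 1) - 2 * k) * (n + 1 - 2 * k) * gS l n (2 * x) k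
      + 4 * ((k + 1 : ℕ) : ℂ) * (l + (n + 1) - ((k + 1 : ℕ) : ℂ)) * gS l n (2 * x) (k + 1) := by
  obtain ⟨p, rfl⟩ := Nat.exists_eq_add_of_le hk
  have e1 : l * (ascPochhammer ℂ (k + p)).eval (l + 1) = (ascPochhammer ℂ (k + p + 1)).eval l := by
    rw [ascPochhammer_succ_left, Polynomial.eval_mul, Polynomial.eval_X, Polynomial.eval_comp]
    simp
  have e2 := ascPochhammer_succ_eval (k + p) l
  rw [show 2 * k + p - k = k + p by omega, show 2 * k + p - 2 * k = p by omega]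
  have hkf : (k.factorial : ℂ) ≠ 0 := by exact_mod_cast k.factorial_ne_zero
  have hpf : (p.factorial : ℂ) ≠ 0 := by exact_mod_cast p.factorial_ne_zero
  have hk1 : (k : ℂ) + 1 ≠ 0 := by exact_mod_cast k.succ_ne_zero
  have hp1 : (p : ℂ) + 1 ≠ 0 := by exact_mod_cast p.succ_ne_zero
  have hg : gS l (2 * k + p) (2 * x) k = ((-1 : ℂ) ^ k * (l * (ascPochhammer ℂ (k + p)).eval (l + 1)) /
      ((Nat.factorial k : ℂ) * ((p + 1) * Nat.factorial p : ℂ))) * ((2 * x) ^ p * (2 * x)) := by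
    rw [gS, if_pos (by omega), show 2 * k + p + 1 - k = k + p + 1 by omega,
      show 2 * k + p + 1 - 2 * k = p + 1 by omega, e1, Nat.factorial_succ, pow_succ]
    push_cast; ring
  rw [hg]
  cases p with
  | zero =>
    have hg2 : gS l (2 * k + 0) (2 * x) (k + 1) = 0 := by
      rw [gS, if_neg (by omega)]
    rw [hg2]
    simp
    field_simp
    ring
  | succ r =>
    have hr1 : (r : ℂ) + 1 ≠ 0 := by exact_mod_cast r.succ_ne_zero
    have hrf : (r.factorial : ℂ) ≠ 0 := by exact_mod_cast r.factorial_ne_zero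
    have hg2 : gS l (2 * k + (r + 1)) (2 * x) (k + 1) = ((-1 : ℂ) ^ (k + 1) * ((ascPochhammer ℂ (k + (r + 1))).eval l) /
      (((k + 1) * Nat.factorial k : ℂ) * (Nat.factorial r : ℂ))) * ((2 * x) ^ r) := by
      rw [gS, if_pos (by omega), show 2 * k + (r + 1) + 1 - (k + 1) = k + (r + 1) by omega,
        show 2 * k + (r + 1) + 1 - 2 * (k + 1) = r by omega, Nat.factorial_succ]
      push_cast; ring
    have e3 : (4 : ℂ) * ((k + 1 : ℕ) : ℂ) * (l + (((2 * k + (r + 1) : ℕ) : ℂ) + 1) - ((k + 1 : ℕ) : ℂ)) * gS l (2 * k + (r + 1)) (2 * x) (k + 1)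
      = 4 * (k + 1) * ((-1 : ℂ) ^ (k + 1) * (l * (ascPochhammer ℂ (k + (r + 1))).eval (l + 1)) /
      (((k + 1) * Nat.factorial k : ℂ) * (Nat.factorial r : ℂ))) * ((2 * x) ^ r) := by
      rw [hg2, e1, e2]; push_cast; ring
    rw [e3, Nat.factorial_succ, show r + 1 - 1 = r by omega]
    push_cast at hp1 ⊢
    field_simp
    ring

theorem geg_rec (l : ℂ) (n : ℕ) (x : ℂ) :
    ∃ d, HasDerivAt (gegenbauer (l + 1) n) d x ∧
    2 * l * ((2 * l + 1) * x * gegenbauer (l + 1) n x - (1 - x ^ 2) * d) =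
      (n + 1) * (n + 1 + 2 * l) * gegenbauer l (n + 1) x := by
  refine ⟨∑ k ∈ Finset.range (n / 2 + 1), (((-1 : ℂ) ^ k * (ascPochhammer ℂ (n - k)).eval (l + 1) /
      ((Nat.factorial k : ℂ) * (Nat.factorial (n - 2 * k) : ℂ))) * (((n - 2 * k : ℕ) : ℂ) * (2 * x) ^ (n - 2 * k - 1) * 2)), ?_, ?_⟩
  · unfold gegenbauer
    refine HasDerivAt.fun_sum fun k _ => ?_
    refine HasDerivAt.const_mul _ ?_
    have h : HasDerivAt (fun x : ℂ => 2 * x) 2 x := by simpa using (hasDerivAt_id x).const_mul (2 : ℂ)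
    exact h.pow (n - 2 * k)
  · have h1 : gegenbauer (l + 1) n x = ∑ k ∈ Finset.range (n / 2 + 1), ((-1 : ℂ) ^ k * (ascPochhammer ℂ (n - k)).eval (l + 1) /
      ((Nat.factorial k : ℂ) * (Nat.factorial (n - 2 * k) : ℂ))) * (2 * x) ^ (n - 2 * k) := rfl
    rw [h1, Finset.mul_sum, Finset.mul_sum, ← Finset.sum_sub_distrib, Finset.mul_sum]
    rw [Finset.sum_congr rfl (fun k hk => gS_step l n k x (by
      have := Finset.mem_range.1 hk; omega))]
    rw [Finset.sum_add_distrib]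
    have hB := Finset.sum_range_succ' (fun k : ℕ => 4 * (k : ℂ) * (l + (n + 1) - (k : ℂ)) * gS l n (2 * x) k) (n / 2 + 1)
    have hA := Finset.sum_range_succ (fun k : ℕ => (2 * l + (n + 1) - 2 * k) * (n + 1 - 2 * k) * gS l n (2 * x) k) (n / 2 + 1)
    have hA0 : (2 * l + (n + 1) - 2 * ((n / 2 + 1 : ℕ) : ℂ)) * (n + 1 - 2 * ((n / 2 + 1 : ℕ) : ℂ)) * gS l n (2 * x) (n / 2 + 1) = 0 := by
      by_cases h : 2 * (n / 2 + 1) = n + 1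
      · have : (2 : ℂ) * ((n / 2 + 1 : ℕ) : ℂ) = n + 1 := by exact_mod_cast h
        rw [this]; ring
      · rw [gS, if_neg (by omega), mul_zero]
    rw [hA0, add_zero] at hA
    simp only [Nat.cast_zero, mul_zero, zero_mul, add_zero] at hB
    rw [← hA, ← hB, ← Finset.sum_add_distrib]
    have h2 : gegenbauer l (n + 1) x = ∑ k ∈ Finset.range (n / 2 + 1 + 1), gS l n (2 * x) k := by
      have h3 : ∑ k ∈ Finset.range ((n + 1) / 2 + 1), gS l n (2 * x) k = ∑ k ∈ Finset.range (n / 2 + 1 + 1), gS l n (2 * x) k := by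
        refine Finset.sum_subset (by intro k; simp; omega) ?_
        intro k _ hk
        have : (n + 1) / 2 + 1 ≤ k := by simpa using hk
        rw [gS, if_neg (by omega)]
      rw [← h3, gegenbauer]
      refine Finset.sum_congr rfl fun k hk => ?_
      have := Finset.mem_range.1 hk
      rw [gS, if_pos (by omega)]
    rw [h2, Finset.mul_sum]
    refine Finset.sum_congr rfl fun k _ => ?_
    ring

theorem geg_eq (n : ℕ) : ∀ (l : ℂ), -(1 / 2 : ℝ) < l.re → ∀ x : ℂ,
    gegenbauer l n x = cc n l * (Qp n l).eval x := by
  induction n with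
  | zero => intro l _ x; simp [gegenbauer, cc, Qp]
  | succ n ih =>
    intro l hl x
    have hl1 : -(1 / 2 : ℝ) < (l + 1).re := by simp; linarith
    obtain ⟨d, hd, h⟩ := geg_rec l n x
    have hf : gegenbauer (l + 1) n = fun x => cc n (l + 1) * (Qp n (l + 1)).eval x := funext (ih (l + 1) hl1)
    rw [hf] at hd h
    have hd2 := ((Qp n (l + 1)).hasDerivAt x).const_mul (cc n (l + 1))
    rw [hd.unique hd2] at h
    have hne : (n + 1 + 2 * l) ≠ 0 := by
      intro h
      have := congrArg Complex.re h
      simp at this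
      have : (0 : ℝ) ≤ n := n.cast_nonneg
      linarith
    have hn1 : ((n : ℂ) + 1) ≠ 0 := by exact_mod_cast n.succ_ne_zero
    apply mul_left_cancel₀ (mul_ne_zero hn1 hne)
    rw [← h, cc, Qp]
    simp only [Polynomial.eval_sub, Polynomial.eval_mul, Polynomial.eval_C, Polynomial.eval_X,
        Polynomial.eval_pow, Polynomial.eval_one]
    field_simp


theorem weier (L : (ℝ → ℂ) → ℂ)
    (hadd : ∀ f g, Continuous f → Continuous g → L (fun x => f x + g x) = L f + L g)
    (hsm : ∀ (c : ℂ) f, Continuous f → L (fun x => c * f x) = c * L f) (C : ℝ)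
    (hb : ∀ f M, Continuous f → (∀ x ∈ Set.Icc (-1 : ℝ) 1, ‖f x‖ ≤ M) → ‖L f‖ ≤ C * M)
    (hm : ∀ n : ℕ, L (fun x => (x : ℂ) ^ n) = 0) (g : ℝ → ℂ) (hg : Continuous g) : L g = 0 := by
  have hp : ∀ p : Polynomial ℂ, L (fun x => p.eval (x : ℂ)) = 0 := by
    intro p
    induction p using Polynomial.induction_on' with
    | add p q h1 h2 =>
      simp only [Polynomial.eval_add]
      rw [hadd _ _ (cont_polyC p) (cont_polyC q), h1, h2, add_zero]
    | monomial n a =>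
      simp only [Polynomial.eval_monomial]
      rw [hsm _ _ (by fun_prop), hm, mul_zero]
  have key : ∀ ε : ℝ, 0 < ε → ‖L g‖ ≤ C * (2 * ε) := by
    intro ε hε
    obtain ⟨p1, h1⟩ := exists_polynomial_near_of_continuousOn (-1) 1 (fun x => (g x).re)
      (Complex.continuous_re.comp hg).continuousOn ε hε
    obtain ⟨p2, h2⟩ := exists_polynomial_near_of_continuousOn (-1) 1 (fun x => (g x).im)
      (Complex.continuous_im.comp hg).continuousOn ε hε
    set p : Polynomial ℂ := p1.map Complex.ofRealHom + Polynomial.C Complex.I * p2.map Complex.ofRealHom with hpd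
    have he : ∀ x : ℝ, p.eval (x : ℂ) = ((p1.eval x : ℝ) : ℂ) + Complex.I * ((p2.eval x : ℝ) : ℂ) := by
      intro x
      have a1 := Polynomial.eval_map_apply (p := p1) Complex.ofRealHom x
      have a2 := Polynomial.eval_map_apply (p := p2) Complex.ofRealHom x
      simp only [Complex.ofRealHom_eq_coe] at a1 a2
      simp [hpd, a1, a2]
    have h3 : L g = L (fun x => g x + (-1) * p.eval (x : ℂ)) + L (fun x => p.eval (x : ℂ)) := by
      rw [← hadd (fun x => g x + (-1) * p.eval (x : ℂ)) (fun x => p.eval (x : ℂ))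
        (hg.add ((cont_polyC p).const_mul _)) (cont_polyC p)]
      congr 1; funext x; ring
    rw [h3, hp p, add_zero]
    refine hb _ _ (hg.add ((cont_polyC p).const_mul _)) ?_
    intro x hx
    have e : g x + (-1) * p.eval (x : ℂ) = (((g x).re - p1.eval x : ℝ) : ℂ) + Complex.I * (((g x).im - p2.eval x : ℝ) : ℂ) := by
      rw [he]
      conv_lhs => rw [← Complex.re_add_im (g x)]
      push_cast; ring
    rw [e]
    refine (norm_add_le _ _).trans ?_
    rw [norm_mul, Complex.norm_I, one_mul, Complex.norm_real, Complex.norm_real, Real.norm_eq_abs, Real.norm_eq_abs]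
    have := h1 x hx
    have := h2 x hx
    rw [abs_sub_comm (g x).re, abs_sub_comm (g x).im]
    linarith
  by_contra hne
  have hpos : 0 < ‖L g‖ := norm_pos_iff.2 hne
  have h1 := key (‖L g‖ / (4 * (|C| + 1))) (by positivity)
  have h2 : C * (2 * (‖L g‖ / (4 * (|C| + 1)))) ≤ (|C| + 1) * (2 * (‖L g‖ / (4 * (|C| + 1)))) := by
    gcongr
    linarith [le_abs_self C]
  have h3 : (|C| + 1) * (2 * (‖L g‖ / (4 * (|C| + 1)))) = ‖L g‖ / 2 := by
    field_simp; norm_num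
  linarith

theorem push_lemma {H1 H2 H3 : ℝ → ℂ} (h1 : Integrable H1 (volume.restrict (Set.Ioc (-1 : ℝ) 1)))
    (h2 : Integrable H2 (volume.restrict (Set.Ioc (0 : ℝ) 1)))
    (h3 : Integrable H3 (volume.restrict (Set.Ioc (-1 : ℝ) 1)))
    (hm : ∀ n : ℕ, (∫ t in (-1 : ℝ)..1, (t : ℂ) ^ n * H1 t) * (∫ y in (0 : ℝ)..1, ((Real.sqrt y : ℝ) : ℂ) ^ n * H2 y)
      = ∫ x in (-1 : ℝ)..1, (x : ℂ) ^ n * H3 x) (g : ℝ → ℂ) (hg : Continuous g) :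
    ∫ t in (-1 : ℝ)..1, ∫ y in (0 : ℝ)..1, g (t * Real.sqrt y) * (H1 t * H2 y) =
      ∫ x in (-1 : ℝ)..1, g x * H3 x := by
  set vI := (volume.restrict (Set.Ioc (-1 : ℝ) 1)) with hvI
  set vY := (volume.restrict (Set.Ioc (0 : ℝ) 1)) with hvY
  have hle1 : (-1 : ℝ) ≤ 1 := by norm_num
  simp only [intervalIntegral.integral_of_le hle1, intervalIntegral.integral_of_le zero_le_one] at hm ⊢
  rw [← hvI, ← hvY] at hm ⊢
  have h12 : Integrable (fun p : ℝ × ℝ => H1 p.1 * H2 p.2) (vI.prod vY) := h1.mul_prod h2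
  have aeI : ∀ᵐ x ∂vI, x ∈ Set.Ioc (-1 : ℝ) 1 := ae_restrict_mem measurableSet_Ioc
  have aeP : ∀ᵐ p ∂(vI.prod vY), p.1 * Real.sqrt p.2 ∈ Set.Icc (-1 : ℝ) 1 := by
    have : (vI.prod vY) = (volume : Measure (ℝ × ℝ)).restrict (Set.Ioc (-1 : ℝ) 1 ×ˢ Set.Ioc (0 : ℝ) 1) := by
      rw [hvI, hvY, Measure.prod_restrict]; rfl
    rw [this]
    filter_upwards [ae_restrict_mem (measurableSet_Ioc.prod measurableSet_Ioc)] with p hp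
    have s0 := Real.sqrt_nonneg p.2
    have s1 : Real.sqrt p.2 ≤ 1 := Real.sqrt_le_one.2 hp.2.2
    have a := hp.1.1
    have b := hp.1.2
    constructor <;> nlinarith
  have bd : ∀ f : ℝ → ℂ, Continuous f → ∃ M, ∀ x ∈ Set.Icc (-1 : ℝ) 1, ‖f x‖ ≤ M := by
    intro f hf
    exact isCompact_Icc.exists_bound_of_continuousOn hf.continuousOn
  have intP : ∀ f : ℝ → ℂ, Continuous f →
      Integrable (fun p : ℝ × ℝ => f (p.1 * Real.sqrt p.2) * (H1 p.1 * H2 p.2)) (vI.prod vY) := by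
    intro f hf
    obtain ⟨M, hM⟩ := bd f hf
    refine h12.bdd_mul (c := M) (by fun_prop : Continuous fun p : ℝ × ℝ => f (p.1 * Real.sqrt p.2)).aestronglyMeasurable ?_
    filter_upwards [aeP] with p hp using hM _ hp
  have intI : ∀ f : ℝ → ℂ, Continuous f → Integrable (fun x => f x * H3 x) vI := by
    intro f hf
    obtain ⟨M, hM⟩ := bd f hf
    refine h3.bdd_mul (c := M) hf.aestronglyMeasurable ?_
    filter_upwards [aeI] with p hp using hM _ ⟨hp.1.le, hp.2⟩
  let L : (ℝ → ℂ) → ℂ := fun f => (∫ p, f (p.1 * Real.sqrt p.2) * (H1 p.1 * H2 p.2) ∂(vI.prod vY)) - ∫ x, f x * H3 x ∂vI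
  have hL := weier L ?_ ?_ ((∫ p, ‖H1 p.1 * H2 p.2‖ ∂(vI.prod vY)) + ∫ x, ‖H3 x‖ ∂vI) ?_ ?_ g hg
  · have := MeasureTheory.integral_prod _ (intP g hg)
    simp only [L] at hL
    rw [this] at hL
    exact sub_eq_zero.1 hL
  · intro f f' hf hf'
    simp only [L, add_mul]
    rw [MeasureTheory.integral_add (intP f hf) (intP f' hf'), MeasureTheory.integral_add (intI f hf) (intI f' hf')]
    ring
  · intro c f hf
    simp only [L, mul_assoc]
    rw [MeasureTheory.integral_const_mul, MeasureTheory.integral_const_mul]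
    ring
  · intro f M hf hM
    refine (norm_sub_le _ _).trans ?_
    rw [add_mul]
    refine add_le_add ?_ ?_
    · rw [← MeasureTheory.integral_mul_const]
      refine norm_integral_le_of_norm_le (h12.norm.mul_const M) ?_
      filter_upwards [aeP] with p hp
      rw [norm_mul, mul_comm]
      exact mul_le_mul_of_nonneg_left (hM _ hp) (norm_nonneg _)
    · rw [← MeasureTheory.integral_mul_const]
      refine norm_integral_le_of_norm_le (h3.norm.mul_const M) ?_
      filter_upwards [aeI] with p hp
      rw [norm_mul, mul_comm]
      exact mul_le_mul_of_nonneg_left (hM _ ⟨hp.1.le, hp.2⟩) (norm_nonneg _)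
  · intro n
    simp only [L]
    rw [sub_eq_zero, ← hm n, ← MeasureTheory.integral_prod_mul]
    refine MeasureTheory.integral_congr_ae (Eventually.of_forall fun p => ?_)
    simp only; push_cast; ring


theorem Q_moment (m n : ℕ) {l : ℂ} (hl : -(1 / 2 : ℝ) < l.re) :
    ∫ x in (-1 : ℝ)..1, (x : ℂ) ^ n * ((Qp m l).eval (x : ℂ) * Wt l x) =
      (n.descFactorial m : ℂ) * ∫ x in (-1 : ℝ)..1, (x : ℂ) ^ (n - m) * Wt (l + m) x := by
  have h := Q_ibp m l (fun j x => (n.descFactorial j : ℂ) * (x : ℂ) ^ (n - j)) hl ?_ ?_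
  · simp only [Nat.descFactorial_zero, Nat.cast_one, one_mul, Nat.sub_zero, mul_assoc] at h
    rw [h, intervalIntegral.integral_const_mul]
  · intro j _ x
    have h1 : HasDerivAt (fun x : ℝ => (x : ℂ) ^ (n - j)) (((n - j : ℕ) : ℂ) * (x : ℂ) ^ (n - j - 1)) x :=
      (hasDerivAt_pow (n - j) (x : ℂ)).comp_ofReal
    convert! h1.const_mul (n.descFactorial j : ℂ) using 1
    rw [Nat.descFactorial_succ, Nat.sub_sub]; push_cast; ring
  · intro j _; fun_prop

theorem reduce {mu b : ℂ} (m : ℕ) (hmu : -(1 / 2 : ℝ) < mu.re) (hb : -1 < b.re) (g : ℝ → ℂ)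
    (hg : Continuous g) :
    ∫ t in (-1 : ℝ)..1, ∫ y in (0 : ℝ)..1, g (t * Real.sqrt y) *
      (((Qp m mu).eval (t : ℂ) * Wt mu t) * ((y : ℂ) ^ (mu + (m : ℂ) / 2) * ((1 - y : ℝ) : ℂ) ^ b)) =
    ∫ x in (-1 : ℝ)..1, g x * (Complex.Gamma (mu + m + 1 / 2) * Complex.Gamma (b + 1) /
        Complex.Gamma (mu + b + 1 + m + 1 / 2) * ((Qp m (mu + b + 1)).eval (x : ℂ) * Wt (mu + b + 1) x)) := by
  have hle1 : (-1 : ℝ) ≤ 1 := by norm_num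
  have hmu' : -(1 / 2 : ℝ) < (mu + b + 1).re := by simp; linarith
  have m0 : (0 : ℝ) ≤ m := m.cast_nonneg
  have hbeta : ∀ n : ℕ, IntegrableOn (fun y : ℝ => (y : ℂ) ^ ((mu + (m + n : ℕ) / 2 + 1) - 1) * (1 - (y : ℂ)) ^ ((b + 1) - 1)) (Set.Ioc 0 1) ∧
      ∫ y in (0 : ℝ)..1, (y : ℂ) ^ ((mu + (m + n : ℕ) / 2 + 1) - 1) * (1 - (y : ℂ)) ^ ((b + 1) - 1) =
      Complex.Gamma (mu + (m + n : ℕ) / 2 + 1) * Complex.Gamma (b + 1) / Complex.Gamma ((mu + (m + n : ℕ) / 2 + 1) + (b + 1)) := by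
    intro n
    have n0 : (0 : ℝ) ≤ n := n.cast_nonneg
    have h1 : 0 < (mu + (m + n : ℕ) / 2 + 1).re := by
      have : ((((m + n : ℕ) : ℂ) / 2).re) = ((m + n : ℕ) : ℝ) / 2 := by
        rw [show (((m + n : ℕ) : ℂ) / 2) = ((((m + n : ℕ) : ℝ) / 2 : ℝ) : ℂ) by push_cast; ring, Complex.ofReal_re]
      rw [Complex.add_re, Complex.add_re, this, Complex.one_re]; push_cast; linarith
    have h2 : 0 < (b + 1).re := by simp; linarith
    refine ⟨?_, ?_⟩
    · have := Complex.betaIntegral_convergent h1 h2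
      rwa [intervalIntegrable_iff_integrableOn_Ioc_of_le zero_le_one] at this
    · rw [← Complex.betaIntegral_eq_Gamma_mul_div _ _ h1 h2]; rfl
  have hI : ∀ l : ℂ, -(1 / 2 : ℝ) < l.re → Integrable (fun x : ℝ => (Qp m l).eval (x : ℂ) * Wt l x)
      (volume.restrict (Set.Ioc (-1 : ℝ) 1)) := by
    intro l hl
    have := cont_mul_Wt_int hl (cont_polyC (Qp m l))
    rwa [intervalIntegrable_iff_integrableOn_Ioc_of_le hle1] at this
  refine push_lemma (H1 := fun t : ℝ => ((Qp m mu).eval (t : ℂ) * Wt mu t))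
    (H2 := fun y : ℝ => ((y : ℂ) ^ (mu + (m : ℂ) / 2) * ((1 - y : ℝ) : ℂ) ^ b))
    (H3 := fun x : ℝ => (Complex.Gamma (mu + m + 1 / 2) * Complex.Gamma (b + 1) /
        Complex.Gamma (mu + b + 1 + m + 1 / 2) * ((Qp m (mu + b + 1)).eval (x : ℂ) * Wt (mu + b + 1) x)))
        (hI mu hmu) ?_ ((hI _ hmu').const_mul _) ?_ g hg
  · have := (hbeta 0).1
    simpa [IntegrableOn] using this
  · intro n
    have e1 : ∀ y ∈ Set.Ioc (0 : ℝ) 1, ((Real.sqrt y : ℝ) : ℂ) ^ n * ((y : ℂ) ^ (mu + (m : ℂ) / 2) * ((1 - y : ℝ) : ℂ) ^ b) =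
      (y : ℂ) ^ ((mu + (m + n : ℕ) / 2 + 1) - 1) * (1 - (y : ℂ)) ^ ((b + 1) - 1) := by
      intro y hy
      have hy0 : (y : ℂ) ≠ 0 := by exact_mod_cast hy.1.ne'
      have : ((Real.sqrt y : ℝ) : ℂ) ^ n = (y : ℂ) ^ ((n : ℂ) / 2) := by
        rw [Real.sqrt_eq_rpow, Complex.ofReal_cpow hy.1.le, ← Complex.cpow_nat_mul]
        congr 1; push_cast; ring
      rw [this, ← mul_assoc, ← Complex.cpow_add _ _ hy0]
      push_cast
      congr 2 <;> ring
    have e2 : ∫ y in (0 : ℝ)..1, ((Real.sqrt y : ℝ) : ℂ) ^ n * ((y : ℂ) ^ (mu + (m : ℂ) / 2) * ((1 - y : ℝ) : ℂ) ^ b) =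
      Complex.Gamma (mu + (m + n : ℕ) / 2 + 1) * Complex.Gamma (b + 1) / Complex.Gamma ((mu + (m + n : ℕ) / 2 + 1) + (b + 1)) := by
      rw [← (hbeta n).2, intervalIntegral.integral_of_le zero_le_one, intervalIntegral.integral_of_le zero_le_one]
      exact setIntegral_congr_fun measurableSet_Ioc e1
    have e3 : ∀ x : ℝ, (x : ℂ) ^ n * (Complex.Gamma (mu + m + 1 / 2) * Complex.Gamma (b + 1) /
        Complex.Gamma (mu + b + 1 + m + 1 / 2) * ((Qp m (mu + b + 1)).eval (x : ℂ) * Wt (mu + b + 1) x)) =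
        (Complex.Gamma (mu + m + 1 / 2) * Complex.Gamma (b + 1) /
        Complex.Gamma (mu + b + 1 + m + 1 / 2)) * ((x : ℂ) ^ n * ((Qp m (mu + b + 1)).eval (x : ℂ) * Wt (mu + b + 1) x)) := by
      intro x; ring
    rw [e2]
    simp only [e3]
    rw [intervalIntegral.integral_const_mul, Q_moment m n hmu, Q_moment m n hmu']
    rcases lt_or_ge n m with hlt | hge
    · rw [Nat.descFactorial_of_lt hlt]; simp
    · obtain ⟨k, rfl⟩ := Nat.exists_eq_add_of_le hge
      rw [Nat.add_sub_cancel_left]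
      rcases Nat.even_or_odd' k with ⟨q, rfl | rfl⟩
      · have hm1 : -(1 / 2 : ℝ) < (mu + m).re := by simp; linarith
        have hm2 : -(1 / 2 : ℝ) < (mu + b + 1 + m).re := by simp; linarith
        rw [moment_even hm1, moment_even hm2]
        have g1 : Complex.Gamma (mu + m + q + 1) ≠ 0 := by
          apply Complex.Gamma_ne_zero_of_re_pos
          have : (0 : ℝ) ≤ q := q.cast_nonneg
          simp; linarith
        have g2 : Complex.Gamma (mu + b + 1 + m + 1 / 2) ≠ 0 := by
          apply Complex.Gamma_ne_zero_of_re_pos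
          simp; linarith
        rw [show mu + ((m + (m + 2 * q) : ℕ) : ℂ) / 2 + 1 + (b + 1) = mu + b + 1 + m + q + 1 by push_cast; ring,
          show mu + ((m + (m + 2 * q) : ℕ) : ℂ) / 2 + 1 = mu + m + q + 1 by push_cast; ring]
        generalize Complex.Gamma (mu + m + q + 1) = G1 at *
        generalize Complex.Gamma (mu + b + 1 + m + 1 / 2) = G2 at *
        generalize Complex.Gamma (mu + b + 1 + m + q + 1) = G3 at *
        generalize Complex.Gamma (mu + m + 1 / 2) = G4 at *
        generalize Complex.Gamma ((q : ℂ) + 1 / 2) = G5 at *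
        field_simp
      · rw [moment_odd, moment_odd]; simp


noncomputable def Ak (β : ℂ) (u : ℝ) : ℂ := ((|u| : ℝ) : ℂ) ^ β
noncomputable def Ok (β : ℂ) (u : ℝ) : ℂ := (u : ℂ) * ((|u| : ℝ) : ℂ) ^ β

theorem Ak_cont {β : ℂ} (h : 0 < β.re) : Continuous (Ak β) :=
  (Complex.continuous_ofReal_cpow_const h).comp continuous_abs

theorem Ak_zero {β : ℂ} (h : 0 < β.re) : Ak β 0 = 0 := by
  have : β ≠ 0 := by rintro rfl; simp at h
  simp [Ak, this]

theorem Ak_hasDeriv_ne (β : ℂ) {u : ℝ} (hu : u ≠ 0) : HasDerivAt (Ak β) (β * Ok (β - 2) u) u := by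
  have hs : (|u| : ℝ) ≠ 0 := abs_ne_zero.mpr hu
  have hpos : 0 < |u| := abs_pos.mpr hu
  have h1 : HasDerivAt (fun z : ℂ => z ^ β) (β * ((|u| : ℝ) : ℂ) ^ (β - 1)) ((|u| : ℝ) : ℂ) := by
    have := (hasDerivAt_id ((|u| : ℝ) : ℂ)).cpow_const (c := β) (by left; simpa using hpos)
    simpa using this
  have h2 := h1.comp_ofReal
  have h3 := h2.scomp u (hasDerivAt_abs hu)
  refine h3.congr_deriv ?_
  have hc : ((|u| : ℝ) : ℂ) ≠ 0 := by exact_mod_cast hs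
  have e : (u : ℂ) = ((SignType.sign u : ℝ) : ℂ) * ((|u| : ℝ) : ℂ) := by
    rw [← Complex.ofReal_mul, sign_mul_abs]
  rw [Ok, Complex.real_smul]
  conv_rhs => rw [e]
  rw [show β - 1 = 1 + (β - 2) by ring, Complex.cpow_add _ _ hc, Complex.cpow_one]
  ring_nf

theorem Ok_norm {β : ℂ} (h : -1 < β.re) (u : ℝ) : ‖Ok β u‖ = ‖Ak (β + 1) u‖ := by
  rcases eq_or_ne u 0 with rfl | hu
  · rw [Ak_zero (by simp; linarith)]; simp [Ok]
  · have hc : ((|u| : ℝ) : ℂ) ≠ 0 := by exact_mod_cast abs_ne_zero.mpr hu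
    rw [Ok, Ak, Complex.cpow_add _ _ hc, norm_mul, norm_mul, Complex.cpow_one, mul_comm]
    simp

theorem Ok_hasDeriv_ne (β : ℂ) {u : ℝ} (hu : u ≠ 0) : HasDerivAt (Ok β) ((β + 1) * Ak β u) u := by
  have h1 : HasDerivAt (fun x : ℝ => (x : ℂ)) 1 u := (hasDerivAt_id (u : ℂ)).comp_ofReal
  have h2 := h1.mul (Ak_hasDeriv_ne β hu)
  refine h2.congr_deriv ?_
  have hc : ((|u| : ℝ) : ℂ) ≠ 0 := by exact_mod_cast abs_ne_zero.mpr hu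
  have e : (u : ℂ) * u = ((|u| : ℝ) : ℂ) * ((|u| : ℝ) : ℂ) := by
    rw [← Complex.ofReal_mul, ← Complex.ofReal_mul, abs_mul_abs_self]
  have e2 : (u : ℂ) * (β * Ok (β - 2) u) = β * Ak β u := by
    rw [Ok, Ak]
    conv_rhs => rw [show β = 1 + (1 + (β - 2)) by ring, Complex.cpow_add _ _ hc, Complex.cpow_add _ _ hc, Complex.cpow_one]
    linear_combination β * ((|u| : ℝ) : ℂ) ^ (β - 2) * e
  rw [e2]; ring

theorem Ok_cont {β : ℂ} (h : -1 < β.re) : Continuous (Ok β) := by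
  rw [continuous_iff_continuousAt]
  intro u
  rcases eq_or_ne u 0 with rfl | hu
  · have h0 : Ok β 0 = 0 := by simp [Ok]
    rw [ContinuousAt, h0]
    rw [tendsto_zero_iff_norm_tendsto_zero]
    simp only [Ok_norm h]
    have h2 : 0 < (β + 1).re := by simp; linarith
    have := ((Ak_cont h2).norm).tendsto 0
    rwa [Ak_zero h2, norm_zero] at this
  · exact (Ok_hasDeriv_ne β hu).continuousAt

theorem Ak_hasDeriv {β : ℂ} (h : 1 < β.re) (u : ℝ) : HasDerivAt (Ak β) (β * Ok (β - 2) u) u := by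
  rcases eq_or_ne u 0 with rfl | hu
  · rw [hasDerivAt_iff_tendsto_slope]
    have h1 : -1 < (β - 2).re := by simp; linarith
    have := ((Ok_cont h1).tendsto 0).mono_left (nhdsWithin_le_nhds (s := {0}ᶜ))
    have h0 : Ok (β - 2) 0 = 0 := by simp [Ok]
    rw [h0] at this ⊢
    rw [mul_zero]
    refine this.congr' ?_
    filter_upwards [self_mem_nhdsWithin] with x hx
    have hx : x ≠ 0 := hx
    have hc : ((|x| : ℝ) : ℂ) ≠ 0 := by exact_mod_cast abs_ne_zero.mpr hx
    have hx' : (x : ℂ) ≠ 0 := by exact_mod_cast hx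
    have e : (x : ℂ) * x = ((|x| : ℝ) : ℂ) * ((|x| : ℝ) : ℂ) := by
      rw [← Complex.ofReal_mul, ← Complex.ofReal_mul, abs_mul_abs_self]
    rw [slope_def_module, Ak_zero (by linarith), sub_zero, sub_zero, Complex.real_smul, Complex.ofReal_inv]
    rw [eq_inv_mul_iff_mul_eq₀ hx', Ok, Ak]
    conv_rhs => rw [show β = 1 + (1 + (β - 2)) by ring, Complex.cpow_add _ _ hc, Complex.cpow_add _ _ hc, Complex.cpow_one]
    linear_combination ((|x| : ℝ) : ℂ) ^ (β - 2) * e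
  · exact Ak_hasDeriv_ne β hu

theorem Ok_hasDeriv {β : ℂ} (h : 0 < β.re) (u : ℝ) : HasDerivAt (Ok β) ((β + 1) * Ak β u) u := by
  rcases eq_or_ne u 0 with rfl | hu
  · rw [hasDerivAt_iff_tendsto_slope]
    have := ((Ak_cont h).tendsto 0).mono_left (nhdsWithin_le_nhds (s := {0}ᶜ))
    rw [Ak_zero h] at this ⊢
    rw [mul_zero]
    refine this.congr' ?_
    filter_upwards [self_mem_nhdsWithin] with x hx
    have hx : x ≠ 0 := hx
    have hx' : (x : ℂ) ≠ 0 := by exact_mod_cast hx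
    have h0 : Ok β 0 = 0 := by simp [Ok]
    rw [slope_def_module, h0, sub_zero, sub_zero, Complex.real_smul, Complex.ofReal_inv]
    rw [eq_inv_mul_iff_mul_eq₀ hx', Ok, Ak]
  · exact Ok_hasDeriv_ne β hu

noncomputable def dd (α : ℂ) : ℕ → ℂ
  | 0 => 1
  | n + 1 => dd α n * (α - n)

/-- derivative sequence of the kernel -/
noncomputable def Kd (α : ℂ) (j : ℕ) (u : ℝ) : ℂ :=
  dd α j * (if Even j then Ak (α - j) u else Ok (α - j - 1) u)

theorem Kd_cont {α : ℂ} {j : ℕ} (h : (j : ℝ) < α.re) : Continuous (Kd α j) := by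
  unfold Kd
  split_ifs
  · exact (Ak_cont (by simp; linarith)).const_mul _
  · exact (Ok_cont (by simp; linarith)).const_mul _

theorem Kd_deriv {α : ℂ} {j : ℕ} (h : (j : ℝ) + 1 < α.re) (u : ℝ) :
    HasDerivAt (Kd α j) (Kd α (j + 1) u) u := by
  unfold Kd
  rcases Nat.even_or_odd j with hj | hj
  · have h2 : ¬ Even (j + 1) := by rw [Nat.not_even_iff_odd]; exact hj.add_one
    simp only [hj, h2, if_true, if_false]
    refine ((Ak_hasDeriv (β := α - j) (by simp; linarith) u).const_mul (dd α j)).congr_deriv ?_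
    rw [show α - (j + 1 : ℕ) - 1 = α - j - 2 by push_cast; ring, dd]; ring
  · have h2 : Even (j + 1) := hj.add_one
    have h3 : ¬ Even j := by rwa [Nat.not_even_iff_odd]
    simp only [h2, h3, if_true, if_false]
    refine ((Ok_hasDeriv (β := α - j - 1) (by simp; linarith) u).const_mul (dd α j)).congr_deriv ?_
    rw [show α - (j + 1 : ℕ) = α - j - 1 by push_cast; ring, dd]; ring


noncomputable def vI : Measure ℝ := volume.restrict (Set.Ioc (-1 : ℝ) 1)

instance : IsFiniteMeasure vI := by unfold vI; infer_instance

theorem vI_int (f : ℝ → ℂ) : ∫ x in (-1 : ℝ)..1, f x = ∫ x, f x ∂vI :=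
  intervalIntegral.integral_of_le (by norm_num)

theorem Wt_vI {l : ℂ} (hl : -(1 / 2 : ℝ) < l.re) : Integrable (Wt l) vI := by
  have := cont_mul_Wt_int hl (f := fun _ => 1) continuous_const
  rw [intervalIntegrable_iff_integrableOn_Ioc_of_le (by norm_num)] at this
  simpa [IntegrableOn, vI] using this

theorem vI_prod : vI.prod vI = (volume : Measure (ℝ × ℝ)).restrict (Set.Ioc (-1 : ℝ) 1 ×ˢ Set.Ioc (-1 : ℝ) 1) := by
  rw [vI, Measure.prod_restrict]; rfl

theorem EE_integrable {l m : ℂ} (hl : -(1 / 2 : ℝ) < l.re) (hm : -(1 / 2 : ℝ) < m.re) {F : ℝ → ℝ → ℂ}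
    (hF : Continuous (fun z : ℝ × ℝ => F z.1 z.2)) :
    Integrable (fun z : ℝ × ℝ => F z.1 z.2 * (Wt l z.1 * Wt m z.2)) (vI.prod vI) := by
  have h1 : Integrable (fun z : ℝ × ℝ => Wt l z.1 * Wt m z.2) (vI.prod vI) :=
    (Wt_vI hl).mul_prod (Wt_vI hm)
  obtain ⟨C, hC⟩ := (isCompact_Icc.prod isCompact_Icc :
    IsCompact (Set.Icc (-1 : ℝ) 1 ×ˢ Set.Icc (-1 : ℝ) 1)).exists_bound_of_continuousOn hF.continuousOn
  refine h1.bdd_mul (c := C) hF.aestronglyMeasurable ?_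
  rw [vI_prod]
  refine ae_restrict_of_forall_mem (measurableSet_Ioc.prod measurableSet_Ioc) ?_
  intro z hz
  exact hC z ⟨Set.Ioc_subset_Icc_self hz.1, Set.Ioc_subset_Icc_self hz.2⟩

noncomputable def EE (l m : ℂ) (F : ℝ → ℝ → ℂ) : ℂ :=
  ∫ z : ℝ × ℝ, F z.1 z.2 * (Wt l z.1 * Wt m z.2) ∂(vI.prod vI)

theorem EE_iter {l m : ℂ} (hl : -(1 / 2 : ℝ) < l.re) (hm : -(1 / 2 : ℝ) < m.re) {F : ℝ → ℝ → ℂ}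
    (hF : Continuous (fun z : ℝ × ℝ => F z.1 z.2)) :
    EE l m F = ∫ s in (-1 : ℝ)..1, (∫ x in (-1 : ℝ)..1, F s x * Wt m x) * Wt l s := by
  rw [EE, integral_prod _ (EE_integrable hl hm hF), vI_int]
  congr 1; ext s
  rw [vI_int, ← MeasureTheory.integral_mul_const]
  congr 1; ext x; ring

theorem EE_iter' {l m : ℂ} (hl : -(1 / 2 : ℝ) < l.re) (hm : -(1 / 2 : ℝ) < m.re) {F : ℝ → ℝ → ℂ}
    (hF : Continuous (fun z : ℝ × ℝ => F z.1 z.2)) :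
    EE l m F = ∫ x in (-1 : ℝ)..1, (∫ s in (-1 : ℝ)..1, F s x * Wt l s) * Wt m x := by
  rw [EE, integral_prod_symm _ (EE_integrable hl hm hF), vI_int]
  congr 1; ext s
  rw [vI_int, ← MeasureTheory.integral_mul_const]
  congr 1; ext x; ring

theorem EE_add {l m : ℂ} (hl : -(1 / 2 : ℝ) < l.re) (hm : -(1 / 2 : ℝ) < m.re) {F G : ℝ → ℝ → ℂ}
    (hF : Continuous (fun z : ℝ × ℝ => F z.1 z.2)) (hG : Continuous (fun z : ℝ × ℝ => G z.1 z.2)) :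
    EE l m (fun s x => F s x + G s x) = EE l m F + EE l m G := by
  rw [EE, EE, EE, ← MeasureTheory.integral_add (EE_integrable hl hm hF) (EE_integrable hl hm hG)]
  congr 1; ext z; ring

theorem EE_smul (l m : ℂ) (c : ℂ) (F : ℝ → ℝ → ℂ) :
    EE l m (fun s x => c * F s x) = c * EE l m F := by
  rw [EE, EE, ← MeasureTheory.integral_const_mul]
  congr 1; ext z; ring

theorem EE_succ {l : ℂ} (hl : -(1 / 2 : ℝ) < l.re) (m : ℂ) (F : ℝ → ℝ → ℂ) :
    EE (l + 1) m F = EE l m (fun s x => (1 - (s : ℂ) ^ 2) * F s x) := by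
  rw [EE, EE, vI_prod]
  refine setIntegral_congr_fun (measurableSet_Ioc.prod measurableSet_Ioc) ?_
  intro z hz
  simp only
  rw [Wt_succ hl]; ring

theorem EE_comm {l m : ℂ} (hl : -(1 / 2 : ℝ) < l.re) (hm : -(1 / 2 : ℝ) < m.re) {F : ℝ → ℝ → ℂ}
    (hF : Continuous (fun z : ℝ × ℝ => F z.1 z.2)) : EE l m F = EE m l (fun x s => F s x) := by
  rw [EE_iter hl hm hF, EE_iter' hm hl]
  exact hF.comp (continuous_snd.prodMk continuous_fst)

theorem EE_ibp {l m : ℂ} (hl : -(1 / 2 : ℝ) < l.re) (hm : -(1 / 2 : ℝ) < m.re) {F F' : ℝ → ℝ → ℂ}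
    (hd : ∀ s x, HasDerivAt (fun s => F s x) (F' s x) s)
    (hF : Continuous (fun z : ℝ × ℝ => F z.1 z.2)) (hF' : Continuous (fun z : ℝ × ℝ => F' z.1 z.2)) :
    EE l m (fun s x => (1 - (s : ℂ) ^ 2) * F' s x) = EE l m (fun s x => (2 * l + 1) * s * F s x) := by
  have hl' : -(1 / 2 : ℝ) < (l + 1).re := by simp; linarith
  rw [← EE_succ hl, EE_iter' hl' hm hF', EE_iter' hl hm (by fun_prop)]
  congr 1; ext x
  rw [W_ibp hl (fun s => hd s x)]
  exact hF'.comp (Continuous.prodMk continuous_id continuous_const)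

theorem EE_ibp' {l m : ℂ} (hl : -(1 / 2 : ℝ) < l.re) (hm : -(1 / 2 : ℝ) < m.re) {F F' : ℝ → ℝ → ℂ}
    (hd : ∀ s x, HasDerivAt (fun x => F s x) (F' s x) x)
    (hF : Continuous (fun z : ℝ × ℝ => F z.1 z.2)) (hF' : Continuous (fun z : ℝ × ℝ => F' z.1 z.2)) :
    EE l m (fun s x => (1 - (x : ℂ) ^ 2) * F' s x) = EE l m (fun s x => (2 * m + 1) * x * F s x) := by
  rw [EE_comm hl hm (by fun_prop), EE_comm hl hm (by fun_prop)]
  exact EE_ibp hm hl (F := fun x s => F s x) (F' := fun x s => F' s x) (fun s x => hd x s)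
    (hF.comp (continuous_snd.prodMk continuous_fst)) (hF'.comp (continuous_snd.prodMk continuous_fst))

theorem mul_Ok {β : ℂ} (h : 0 < β.re) (u : ℝ) : (u : ℂ) * Ok (β - 2) u = Ak β u := by
  rcases eq_or_ne u 0 with rfl | hx
  · rw [Ak_zero h]; simp
  · have hc : ((|u| : ℝ) : ℂ) ≠ 0 := by exact_mod_cast abs_ne_zero.mpr hx
    have e : (u : ℂ) * u = ((|u| : ℝ) : ℂ) * ((|u| : ℝ) : ℂ) := by
      rw [← Complex.ofReal_mul, ← Complex.ofReal_mul, abs_mul_abs_self]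
    rw [Ok, Ak]
    conv_rhs => rw [show β = 1 + (1 + (β - 2)) by ring, Complex.cpow_add _ _ hc, Complex.cpow_add _ _ hc, Complex.cpow_one]
    linear_combination ((|u| : ℝ) : ℂ) ^ (β - 2) * e

theorem J_rec {l m ν : ℂ} (hl : -(1 / 2 : ℝ) < l.re) (hm : -(1 / 2 : ℝ) < m.re) (hν : 1 / 2 < ν.re) :
    (l + m + ν + 1) * (l + ν + 1) * EE (l + 1) m (fun s x => Ak (2 * ν) (s - x)) =
      (l + 1 / 2) * (l + m + 2 * ν + 1) * EE l m (fun s x => Ak (2 * ν) (s - x)) := by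
  have h1 : 1 < (2 * ν).re := by simp; linarith
  have hA : Continuous (fun z : ℝ × ℝ => Ak (2 * ν) (z.1 - z.2)) :=
    (Ak_cont (by linarith)).comp (by fun_prop)
  have hO : Continuous (fun z : ℝ × ℝ => Ok (2 * ν - 2) (z.1 - z.2)) :=
    (Ok_cont (by simp at h1 ⊢; linarith)).comp (by fun_prop)
  have hid : ∀ s : ℝ, HasDerivAt (fun x : ℝ => (x : ℂ)) 1 s := fun s => (hasDerivAt_id (s : ℂ)).comp_ofReal
  have dS : ∀ s x : ℝ, HasDerivAt (fun s => Ak (2 * ν) (s - x)) (2 * ν * Ok (2 * ν - 2) (s - x)) s := by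
    intro s x
    have := (Ak_hasDeriv h1 (s - x)).scomp s ((hasDerivAt_id s).sub_const x)
    simpa [Function.comp_def] using this
  have dX : ∀ s x : ℝ, HasDerivAt (fun x => Ak (2 * ν) (s - x)) (-(2 * ν * Ok (2 * ν - 2) (s - x))) x := by
    intro s x
    have := (Ak_hasDeriv h1 (s - x)).scomp x ((hasDerivAt_id x).const_sub s)
    simpa [Function.comp_def] using this
  have i1 := EE_ibp hl hm (F := fun s x => (x : ℂ) * Ak (2 * ν) (s - x))
    (F' := fun s x => (x : ℂ) * (2 * ν * Ok (2 * ν - 2) (s - x))) (fun s x => (dS s x).const_mul _)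
    (by fun_prop) (by fun_prop)
  have i2 := EE_ibp' hl hm (F := fun s x => (s : ℂ) * Ak (2 * ν) (s - x))
    (F' := fun s x => (s : ℂ) * (-(2 * ν * Ok (2 * ν - 2) (s - x)))) (fun s x => (dX s x).const_mul _)
    (by fun_prop) (by fun_prop)
  have i3 := EE_ibp hl hm (F := fun s x => (s : ℂ) * Ak (2 * ν) (s - x))
    (F' := fun s x => 1 * Ak (2 * ν) (s - x) + (s : ℂ) * (2 * ν * Ok (2 * ν - 2) (s - x))) (fun s x => (hid s).mul (dS s x))
    (by fun_prop) (by fun_prop)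
  have key : ∀ s x : ℝ, (s : ℂ) * Ok (2 * ν - 2) (s - x) = Ak (2 * ν) (s - x) + x * Ok (2 * ν - 2) (s - x) := by
    intro s x
    have := mul_Ok (β := 2 * ν) (by linarith) (s - x)
    push_cast at this
    linear_combination this
  -- basis of moments
  set k := fun s x : ℝ => Ak (2 * ν) (s - x) with hk
  have b1 := EE_add hl hm (F := fun s x => (1 - (s : ℂ) ^ 2) * ((x : ℂ) * (2 * ν * Ok (2 * ν - 2) (s - x))))
    (G := fun s x => (1 - (x : ℂ) ^ 2) * ((s : ℂ) * (-(2 * ν * Ok (2 * ν - 2) (s - x))))) (by fun_prop) (by fun_prop)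
  have b2 := EE_add hl hm (F := fun s x => (1 - (s : ℂ) ^ 2) * (1 * Ak (2 * ν) (s - x) + (s : ℂ) * (2 * ν * Ok (2 * ν - 2) (s - x))))
    (G := fun s x => (1 - (x : ℂ) ^ 2) * ((s : ℂ) * (-(2 * ν * Ok (2 * ν - 2) (s - x))))) (by fun_prop) (by fun_prop)
  rw [i1, i2] at b1
  rw [i3, i2] at b2
  have f1 : (fun s x : ℝ => (1 - (s : ℂ) ^ 2) * ((x : ℂ) * (2 * ν * Ok (2 * ν - 2) (s - x))) +
      (1 - (x : ℂ) ^ 2) * ((s : ℂ) * (-(2 * ν * Ok (2 * ν - 2) (s - x))))) =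
      fun s x : ℝ => (-(2 * ν)) * Ak (2 * ν) (s - x) + (-(2 * ν)) * ((s * x : ℂ) * Ak (2 * ν) (s - x)) := by
    funext s x
    linear_combination (-(2 * ν) - (2 * ν) * s * x) * key s x
  have f2 : (fun s x : ℝ => (1 - (s : ℂ) ^ 2) * (1 * Ak (2 * ν) (s - x) + (s : ℂ) * (2 * ν * Ok (2 * ν - 2) (s - x))) +
      (1 - (x : ℂ) ^ 2) * ((s : ℂ) * (-(2 * ν * Ok (2 * ν - 2) (s - x))))) =
      fun s x : ℝ => (1 * Ak (2 * ν) (s - x) + (-(2 * ν)) * ((s * x : ℂ) * Ak (2 * ν) (s - x))) +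
        (-(1 + 2 * ν)) * ((s : ℂ) ^ 2 * Ak (2 * ν) (s - x)) := by
    funext s x
    linear_combination (-(2 * ν) * s * (s + x)) * key s x
  rw [f1, EE_add hl hm (by fun_prop) (by fun_prop), EE_smul, EE_smul] at b1
  rw [f2, EE_add hl hm (by fun_prop) (by fun_prop), EE_add hl hm (by fun_prop) (by fun_prop), EE_smul, EE_smul, EE_smul] at b2
  have g1 : EE l m (fun s x => (2 * l + 1) * s * ((x : ℂ) * Ak (2 * ν) (s - x))) =
      (2 * l + 1) * EE l m (fun s x : ℝ => (s * x : ℂ) * Ak (2 * ν) (s - x)) := by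
    rw [← EE_smul]; congr 1; funext s x; ring
  have g2 : EE l m (fun s x => (2 * m + 1) * x * ((s : ℂ) * Ak (2 * ν) (s - x))) =
      (2 * m + 1) * EE l m (fun s x : ℝ => (s * x : ℂ) * Ak (2 * ν) (s - x)) := by
    rw [← EE_smul]; congr 1; funext s x; ring
  have g3 : EE l m (fun s x => (2 * l + 1) * s * ((s : ℂ) * Ak (2 * ν) (s - x))) =
      (2 * l + 1) * EE l m (fun s x : ℝ => (s : ℂ) ^ 2 * Ak (2 * ν) (s - x)) := by
    rw [← EE_smul]; congr 1; funext s x; ring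
  rw [g1, g2] at b1
  rw [g3, g2] at b2
  have g4 : EE (l + 1) m k = EE l m k + (-1) * EE l m (fun s x : ℝ => (s : ℂ) ^ 2 * Ak (2 * ν) (s - x)) := by
    rw [EE_succ hl, ← EE_smul, ← EE_add hl hm (by fun_prop) (by fun_prop)]
    congr 1; funext s x; simp only [hk]; ring
  rw [g4]
  change _ = _
  have e1 : EE l m (fun s x : ℝ => Ak (2 * ν) (s - x)) = EE l m k := rfl
  rw [e1] at b1 b2
  generalize EE l m k = X at *
  generalize EE l m (fun s x : ℝ => (s : ℂ) ^ 2 * Ak (2 * ν) (s - x)) = Y at *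
  generalize EE l m (fun s x : ℝ => (s * x : ℂ) * Ak (2 * ν) (s - x)) = Z at *
  linear_combination ((l + m + ν + 1) / 2) * b2 - (m + 1 / 2 + ν) / 2 * b1


theorem Gamma_GammaSeq {a : ℂ} (ha : 0 < a.re) (n : ℕ) :
    Complex.Gamma (a + (n + 1)) * Complex.GammaSeq a n = Complex.Gamma a * ((n : ℂ) ^ a * n.factorial) := by
  have h0 : ∀ j : ℕ, a + j ≠ 0 := by
    intro j h
    have := congrArg Complex.re h
    have hj : (0 : ℝ) ≤ j := j.cast_nonneg
    simp at this; linarith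
  have h1 : ∀ n : ℕ, Complex.Gamma (a + (n + 1)) = Complex.Gamma a * ∏ j ∈ Finset.range (n + 1), (a + j) := by
    intro n
    induction n with
    | zero =>
      have h00 := h0 0
      simp at h00 ⊢
      rw [Complex.Gamma_add_one _ h00]; ring
    | succ n ih =>
      rw [Finset.prod_range_succ, ← mul_assoc, ← ih]
      have := Complex.Gamma_add_one _ (h0 (n + 1))
      push_cast at this ⊢
      rw [add_assoc a] at this
      rw [this]; ring
  have h2 : ∏ j ∈ Finset.range (n + 1), (a + j) ≠ 0 := Finset.prod_ne_zero_iff.mpr (fun j _ => h0 j)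
  rw [h1, Complex.GammaSeq]
  field_simp

theorem T_lim {a : ℂ} (ha : 0 < a.re) :
    Tendsto (fun n : ℕ => Complex.Gamma (a + (n + 1)) / ((n : ℂ) ^ a * n.factorial)) atTop (nhds 1) := by
  have hg := Complex.Gamma_ne_zero_of_re_pos ha
  have h := (tendsto_const_nhds (x := Complex.Gamma a)).div (Complex.GammaSeq_tendsto_Gamma a) hg
  rw [div_self hg] at h
  refine h.congr' ?_
  have hne := (Complex.GammaSeq_tendsto_Gamma a).eventually_ne hg
  filter_upwards [hne, eventually_gt_atTop 0] with n hn h0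
  have h1 : (n : ℂ) ≠ 0 := by exact_mod_cast h0.ne'
  have h2 : (n : ℂ) ^ a ≠ 0 := by rw [Ne, Complex.cpow_eq_zero_iff]; tauto
  have h3 : (n.factorial : ℂ) ≠ 0 := by exact_mod_cast n.factorial_ne_zero
  have := Gamma_GammaSeq ha n
  simp only [Pi.div_apply]
  rw [div_eq_div_iff hn (mul_ne_zero h2 h3), ← this]

theorem gamma_ratio {a1 a2 a3 b1 b2 b3 : ℂ} (h1 : 0 < a1.re) (h2 : 0 < a2.re) (h3 : 0 < a3.re)
    (k1 : 0 < b1.re) (k2 : 0 < b2.re) (k3 : 0 < b3.re) (hs : a1 + a2 + a3 = b1 + b2 + b3) :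
    Tendsto (fun n : ℕ => Complex.Gamma (a1 + (n + 1)) * Complex.Gamma (a2 + (n + 1)) * Complex.Gamma (a3 + (n + 1)) /
      (Complex.Gamma (b1 + (n + 1)) * Complex.Gamma (b2 + (n + 1)) * Complex.Gamma (b3 + (n + 1)))) atTop (nhds 1) := by
  have h := (((T_lim h1).mul (T_lim h2)).mul (T_lim h3)).div (((T_lim k1).mul (T_lim k2)).mul (T_lim k3)) (by norm_num)
  norm_num at h
  refine h.congr' ?_
  filter_upwards [eventually_gt_atTop 0] with n h0
  have h1 : (n : ℂ) ≠ 0 := by exact_mod_cast h0.ne'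
  have hp : ∀ a : ℂ, (n : ℂ) ^ a ≠ 0 := by intro a; rw [Ne, Complex.cpow_eq_zero_iff]; tauto
  have h3 : (n.factorial : ℂ) ≠ 0 := by exact_mod_cast n.factorial_ne_zero
  have e : (n : ℂ) ^ a1 * (n : ℂ) ^ a2 * (n : ℂ) ^ a3 = (n : ℂ) ^ b1 * (n : ℂ) ^ b2 * (n : ℂ) ^ b3 := by
    rw [← Complex.cpow_add _ _ h1, ← Complex.cpow_add _ _ h1, ← Complex.cpow_add _ _ h1, ← Complex.cpow_add _ _ h1, hs]
  simp only [Pi.div_apply]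
  have p1 := hp a1
  have p2 := hp a2
  have p3 := hp a3
  have q1 := hp b1
  have q2 := hp b2
  have q3 := hp b3
  generalize (n : ℂ) ^ a1 = A1 at *
  generalize (n : ℂ) ^ a2 = A2 at *
  generalize (n : ℂ) ^ a3 = A3 at *
  generalize (n : ℂ) ^ b1 = B1 at *
  generalize (n : ℂ) ^ b2 = B2 at *
  generalize (n : ℂ) ^ b3 = B3 at *
  generalize (n.factorial : ℂ) = N at *
  generalize Complex.Gamma (a1 + (n + 1)) = C1
  generalize Complex.Gamma (a2 + (n + 1)) = C2
  generalize Complex.Gamma (a3 + (n + 1)) = C3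
  generalize Complex.Gamma (b1 + (n + 1)) = D1
  generalize Complex.Gamma (b2 + (n + 1)) = D2
  generalize Complex.Gamma (b3 + (n + 1)) = D3
  have e1 : C1 / (A1 * N) * (C2 / (A2 * N)) * (C3 / (A3 * N)) = C1 * C2 * C3 / ((A1 * A2 * A3) * N ^ 3) := by
    field_simp
  have e2 : D1 / (B1 * N) * (D2 / (B2 * N)) * (D3 / (B3 * N)) = D1 * D2 * D3 / ((A1 * A2 * A3) * N ^ 3) := by
    rw [e]; field_simp
  rw [e1, e2]
  have : A1 * A2 * A3 * N ^ 3 ≠ 0 := by positivity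
  generalize A1 * A2 * A3 * N ^ 3 = M at *
  rw [div_div_div_cancel_right₀ this]

theorem Wt_nat {l : ℂ} (hl : -(1 / 2 : ℝ) < l.re) (n : ℕ) (x : ℝ) :
    Wt (l + n) x = ((1 - x ^ 2 : ℝ) ^ n : ℝ) • Wt l x := by
  induction n with
  | zero => simp
  | succ n ih =>
    have : -(1 / 2 : ℝ) < (l + n).re := by
      have hj : (0 : ℝ) ≤ n := n.cast_nonneg
      simp; linarith
    have h := Wt_succ this x
    rw [show l + (n + 1 : ℕ) = l + n + 1 by push_cast; ring, h, ih, Complex.real_smul, Complex.real_smul]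
    push_cast; ring

theorem h_cont0 {m : ℂ} (hm : -(1 / 2 : ℝ) < m.re) {k : ℝ → ℂ} (hk : Continuous k) :
    ContinuousAt (fun s : ℝ => ∫ x in (-1 : ℝ)..1, k (s - x) * Wt m x) 0 := by
  simp only [vI_int]
  obtain ⟨C, hC⟩ := (isCompact_Icc : IsCompact (Set.Icc (-2 : ℝ) 2)).exists_bound_of_continuousOn hk.continuousOn
  refine MeasureTheory.continuousAt_of_dominated (bound := fun x => C * ‖Wt m x‖) ?_ ?_ ?_ ?_
  · refine Eventually.of_forall fun s => ?_
    exact (Continuous.aestronglyMeasurable (by fun_prop)).mul (Wt_vI hm).1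
  · filter_upwards [Ioo_mem_nhds (show (-1 : ℝ) < 0 by norm_num) (show (0 : ℝ) < 1 by norm_num)] with s hs
    refine ae_restrict_of_forall_mem measurableSet_Ioc fun x hx => ?_
    rw [norm_mul]
    gcongr
    exact hC _ ⟨by linarith [hs.1, hx.2], by linarith [hs.2, hx.1]⟩
  · exact (Wt_vI hm).norm.const_mul C
  · refine Eventually.of_forall fun x => ?_
    exact (hk.continuousAt.comp (by fun_prop)).mul continuousAt_const

theorem I_val (n : ℕ) : ((∫ x in Set.Icc (-1 : ℝ) 1, (1 - x ^ 2) ^ n : ℝ) : ℂ) =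
    Complex.Gamma (1 / 2) * Complex.Gamma (n + 1) / Complex.Gamma (n + 3 / 2) := by
  have h := moment_even (l := n + 1 / 2) (by have := n.cast_nonneg (α := ℝ); simp; linarith) 0
  simp only [mul_zero, pow_zero, one_mul, Nat.cast_zero, zero_add, add_zero] at h
  rw [show (n : ℂ) + 1 / 2 + 1 / 2 = n + 1 by ring, show (n : ℂ) + 1 / 2 + 1 = n + 3 / 2 by ring] at h
  rw [← h, integral_Icc_eq_integral_Ioc, ← intervalIntegral.integral_of_le (by norm_num), ← intervalIntegral.integral_ofReal]
  congr 1; ext x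
  rw [Wt, add_sub_cancel_right, Complex.cpow_natCast]; push_cast; ring

theorem J_lim {l m : ℂ} (hl : -(1 / 2 : ℝ) < l.re) (hm : -(1 / 2 : ℝ) < m.re) {k : ℝ → ℂ} (hk : Continuous k) :
    Tendsto (fun n : ℕ => EE (l + n) m (fun s x => k (s - x)) /
       (Complex.Gamma (1 / 2) * Complex.Gamma (n + 1) / Complex.Gamma (n + 3 / 2))) atTop
      (nhds (∫ x in (-1 : ℝ)..1, k (0 - x) * Wt m x)) := by
  have hkc : Continuous (fun z : ℝ × ℝ => k (z.1 - z.2)) := hk.comp (by fun_prop)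
  have hint : Integrable (fun s => (∫ x in (-1 : ℝ)..1, k (s - x) * Wt m x) * Wt l s) vI := by
    have := (EE_integrable hl hm (F := fun s x => k (s - x)) hkc).integral_prod_left
    refine this.congr (Eventually.of_forall fun s => ?_)
    simp only
    rw [vI_int, ← MeasureTheory.integral_mul_const]
    congr 1; ext x; ring
  have h := tendsto_setIntegral_pow_smul_of_unique_maximum_of_isCompact_of_integrableOn (μ := (volume : Measure ℝ))
    (s := Set.Icc (-1 : ℝ) 1) (x₀ := 0) isCompact_Icc (c := fun x => 1 - x ^ 2)
    (g := fun s => (∫ x in (-1 : ℝ)..1, k (s - x) * Wt m x) * Wt l s) (by fun_prop) ?_ ?_ ?_ ?_ ?_ ?_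
  · have e0 : Wt l 0 = 1 := by simp [Wt]
    simp only [e0, mul_one] at h
    refine h.congr fun n => ?_
    have hln : -(1 / 2 : ℝ) < (l + n).re := by
      have := n.cast_nonneg (α := ℝ); simp; linarith
    rw [← I_val, EE_iter hln hm hkc, Complex.real_smul, Complex.ofReal_inv, div_eq_inv_mul]
    congr 1
    rw [integral_Icc_eq_integral_Ioc, intervalIntegral.integral_of_le (by norm_num)]
    congr 1; ext s
    rw [Wt_nat hl]
    simp only [Complex.real_smul]; ring
  · intro y _ hy
    have := sq_pos_of_ne_zero hy
    simp; linarith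
  · intro x hx; nlinarith [hx.1, hx.2]
  · norm_num
  · rw [interior_Icc]; exact subset_closure ⟨by norm_num, by norm_num⟩
  · rw [integrableOn_Icc_iff_integrableOn_Ioc]; exact hint
  · refine ((h_cont0 hm hk).mul ?_).continuousWithinAt
    have : ContinuousAt (fun s : ℝ => ((1 - s ^ 2 : ℝ) : ℂ)) 0 := by fun_prop
    exact this.cpow continuousAt_const (by left; simp)

noncomputable def RR (l m ν : ℂ) : ℂ := Complex.Gamma (1 / 2) * Complex.Gamma (l + 1 / 2) * Complex.Gamma (m + 1 / 2) *
  Complex.Gamma (ν + 1 / 2) * Complex.Gamma (l + m + 2 * ν + 1) /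
  (Complex.Gamma (l + m + ν + 1) * Complex.Gamma (l + ν + 1) * Complex.Gamma (m + ν + 1))

theorem RR_ne {l m ν : ℂ} (hl : -(1 / 2 : ℝ) < l.re) (hm : -(1 / 2 : ℝ) < m.re) (hν : 0 < ν.re) : RR l m ν ≠ 0 := by
  unfold RR
  refine div_ne_zero (mul_ne_zero (mul_ne_zero (mul_ne_zero (mul_ne_zero ?_ ?_) ?_) ?_) ?_)
    (mul_ne_zero (mul_ne_zero ?_ ?_) ?_) <;>
  · apply Complex.Gamma_ne_zero_of_re_pos
    simp; try linarith

theorem RR_rec {l m ν : ℂ} (hl : -(1 / 2 : ℝ) < l.re) (hm : -(1 / 2 : ℝ) < m.re) (hν : 0 < ν.re) :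
    (l + m + ν + 1) * (l + ν + 1) * RR (l + 1) m ν = (l + 1 / 2) * (l + m + 2 * ν + 1) * RR l m ν := by
  have ne : ∀ z : ℂ, 0 < z.re → z ≠ 0 := by rintro z hz rfl; simp at hz
  have n1 := ne (l + 1 / 2) (by simp; linarith)
  have n2 := ne (l + m + 2 * ν + 1) (by simp; linarith)
  have n3 := ne (l + m + ν + 1) (by simp; linarith)
  have n4 := ne (l + ν + 1) (by simp; linarith)
  have g3 := Complex.Gamma_ne_zero_of_re_pos (s := l + m + ν + 1) (by simp; linarith)
  have g4 := Complex.Gamma_ne_zero_of_re_pos (s := l + ν + 1) (by simp; linarith)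
  have g5 := Complex.Gamma_ne_zero_of_re_pos (s := m + ν + 1) (by simp; linarith)
  unfold RR
  rw [show l + 1 + 1 / 2 = (l + 1 / 2) + 1 by ring, show l + 1 + m + 2 * ν + 1 = (l + m + 2 * ν + 1) + 1 by ring,
    show l + 1 + m + ν + 1 = (l + m + ν + 1) + 1 by ring, show l + 1 + ν + 1 = (l + ν + 1) + 1 by ring,
    Complex.Gamma_add_one _ n1, Complex.Gamma_add_one _ n2, Complex.Gamma_add_one _ n3, Complex.Gamma_add_one _ n4]
  generalize Complex.Gamma (l + 1 / 2) = G1 at *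
  generalize Complex.Gamma (l + m + 2 * ν + 1) = G2 at *
  generalize Complex.Gamma (l + m + ν + 1) = G3 at *
  generalize Complex.Gamma (l + ν + 1) = G4 at *
  generalize Complex.Gamma (m + ν + 1) = G5 at *
  generalize Complex.Gamma (m + 1 / 2) = G6 at *
  generalize Complex.Gamma (ν + 1 / 2) = G7 at *
  generalize Complex.Gamma (1 / 2) = G8 at *
  generalize l + 1 / 2 = z1 at *
  generalize l + m + 2 * ν + 1 = z2 at *
  generalize l + m + ν + 1 = z3 at *
  generalize l + ν + 1 = z4 at *
  field_simp

theorem J_base {l m ν : ℂ} (hl : -(1 / 2 : ℝ) < l.re) (hm : -(1 / 2 : ℝ) < m.re) (hν : 1 / 2 < ν.re) :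
    EE l m (fun s x => Ak (2 * ν) (s - x)) = RR l m ν := by
  have hν0 : 0 < ν.re := by linarith
  have ne : ∀ z : ℂ, 0 < z.re → z ≠ 0 := by rintro z hz rfl; simp at hz
  have hln : ∀ n : ℕ, -(1 / 2 : ℝ) < (l + n).re := by
    intro n; have := n.cast_nonneg (α := ℝ); simp; linarith
  have q : ∀ n : ℕ, EE (l + n) m (fun s x => Ak (2 * ν) (s - x)) / RR (l + n) m ν =
      EE l m (fun s x => Ak (2 * ν) (s - x)) / RR l m ν := by
    intro n
    induction n with
    | zero => simp
    | succ n ih =>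
      rw [← ih]
      have h1 := J_rec (hln n) hm hν
      have h2 := RR_rec (hln n) hm hν0
      have hl1 : -(1 / 2 : ℝ) < (l + n + 1).re := by have := hln n; simp at this ⊢; linarith
      have hl2 := hln n
      have r1 := RR_ne hl1 hm hν0
      have r2 := RR_ne hl2 hm hν0
      have n3 := ne (l + n + m + ν + 1) (by simp at hl2 ⊢; linarith)
      have n4 := ne (l + n + ν + 1) (by simp at hl2 ⊢; linarith)
      rw [show l + (n + 1 : ℕ) = l + n + 1 by push_cast; ring, div_eq_div_iff r1 r2]
      apply mul_left_cancel₀ (mul_ne_zero n3 n4)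
      linear_combination RR (l + n) m ν * h1 - EE (l + n) m (fun s x => Ak (2 * ν) (s - x)) * h2
  have hk : Continuous (Ak (2 * ν)) := Ak_cont (by simp; linarith)
  have L1 := (J_lim hl hm hk).comp (tendsto_add_atTop_nat 1)
  have hh0 : ∫ x in (-1 : ℝ)..1, Ak (2 * ν) (0 - x) * Wt m x =
      Complex.Gamma (m + 1 / 2) * Complex.Gamma (ν + 1 / 2) / Complex.Gamma (m + ν + 1) := by
    have := (beta_abs (a := ν + 1 / 2) (c := m + 1 / 2) (by simp; linarith) (by simp; linarith)).2
    rw [Complex.betaIntegral_eq_Gamma_mul_div _ _ (by simp; linarith) (by simp; linarith)] at this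
    rw [show m + ν + 1 = (ν + 1 / 2) + (m + 1 / 2) by ring, mul_comm (Complex.Gamma (m + 1 / 2)), ← this]
    congr 1; ext x
    rw [Ak, Wt, zero_sub, abs_neg]; congr 2 <;> ring
  have L2 := (gamma_ratio (a1 := l + 1 / 2) (a2 := l + m + 2 * ν + 1) (a3 := 3 / 2) (b1 := l + m + ν + 1)
    (b2 := l + ν + 1) (b3 := 1) (by simp; linarith) (by simp; linarith) (by norm_num) (by simp; linarith)
    (by simp; linarith) (by norm_num) (by ring)).const_mul
    (Complex.Gamma (m + 1 / 2) * Complex.Gamma (ν + 1 / 2) / Complex.Gamma (m + ν + 1))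
  rw [hh0] at L1
  have hne : Complex.Gamma (m + 1 / 2) * Complex.Gamma (ν + 1 / 2) / Complex.Gamma (m + ν + 1) ≠ 0 := by
    refine div_ne_zero (mul_ne_zero ?_ ?_) ?_ <;>
    · apply Complex.Gamma_ne_zero_of_re_pos
      simp; try linarith
  rw [mul_one] at L2
  have L3 := L1.div L2 hne
  rw [div_self hne] at L3
  have L4 : Tendsto (fun _ : ℕ => EE l m (fun s x => Ak (2 * ν) (s - x)) / RR l m ν) atTop (nhds 1) := by
    refine L3.congr fun n => ?_
    rw [← q (n + 1)]
    simp only [Pi.div_apply, Function.comp]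
    rw [RR]
    have c1 : Complex.Gamma (((n + 1 : ℕ) : ℂ) + 1) ≠ 0 := by
      apply Complex.Gamma_ne_zero_of_re_pos; simp; positivity
    have c2 : Complex.Gamma (((n + 1 : ℕ) : ℂ) + 3 / 2) ≠ 0 := by
      apply Complex.Gamma_ne_zero_of_re_pos; simp; positivity
    have c3 : Complex.Gamma (1 / 2) ≠ 0 := by
      apply Complex.Gamma_ne_zero_of_re_pos; norm_num
    rw [show (1 : ℂ) + (n + 1) = ((n + 1 : ℕ) : ℂ) + 1 by push_cast; ring,
      show (3 / 2 : ℂ) + (n + 1) = ((n + 1 : ℕ) : ℂ) + 3 / 2 by push_cast; ring,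
      show l + 1 / 2 + ((n : ℂ) + 1) = l + (n + 1 : ℕ) + 1 / 2 by push_cast; ring,
      show l + m + 2 * ν + 1 + ((n : ℂ) + 1) = l + (n + 1 : ℕ) + m + 2 * ν + 1 by push_cast; ring,
      show l + m + ν + 1 + ((n : ℂ) + 1) = l + (n + 1 : ℕ) + m + ν + 1 by push_cast; ring,
      show l + ν + 1 + ((n : ℂ) + 1) = l + (n + 1 : ℕ) + ν + 1 by push_cast; ring]
    have d1 : Complex.Gamma (m + ν + 1) ≠ 0 := by
      apply Complex.Gamma_ne_zero_of_re_pos; simp; linarith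
    have hl2 := hln (n + 1)
    have d2 : Complex.Gamma (l + (n + 1 : ℕ) + m + ν + 1) ≠ 0 := by
      apply Complex.Gamma_ne_zero_of_re_pos; simp at hl2 ⊢; linarith
    have d3 : Complex.Gamma (l + (n + 1 : ℕ) + ν + 1) ≠ 0 := by
      apply Complex.Gamma_ne_zero_of_re_pos; simp at hl2 ⊢; linarith
    have d4 : Complex.Gamma (l + (n + 1 : ℕ) + m + 2 * ν + 1) ≠ 0 := by
      apply Complex.Gamma_ne_zero_of_re_pos; simp at hl2 ⊢; linarith
    have d5 : Complex.Gamma (l + (n + 1 : ℕ) + 1 / 2) ≠ 0 := by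
      apply Complex.Gamma_ne_zero_of_re_pos; simp at hl2 ⊢; linarith
    have d6 : Complex.Gamma (m + 1 / 2) ≠ 0 := by
      apply Complex.Gamma_ne_zero_of_re_pos; simp at hl2 ⊢; linarith
    have d7 : Complex.Gamma (ν + 1 / 2) ≠ 0 := by
      apply Complex.Gamma_ne_zero_of_re_pos; simp at hl2 ⊢; linarith
    generalize EE (l + (n + 1 : ℕ)) m (fun s x => Ak (2 * ν) (s - x)) = X at *
    generalize Complex.Gamma (l + (n + 1 : ℕ) + m + ν + 1) = G1 at *
    generalize Complex.Gamma (l + (n + 1 : ℕ) + ν + 1) = G2 at *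
    generalize Complex.Gamma (l + (n + 1 : ℕ) + m + 2 * ν + 1) = G3 at *
    generalize Complex.Gamma (l + (n + 1 : ℕ) + 1 / 2) = G4 at *
    generalize Complex.Gamma (m + 1 / 2) = G5 at *
    generalize Complex.Gamma (ν + 1 / 2) = G6 at *
    generalize Complex.Gamma (m + ν + 1) = G7 at *
    generalize Complex.Gamma (1 / 2) = G8 at *
    generalize Complex.Gamma (((n + 1 : ℕ) : ℂ) + 1) = G9 at *
    generalize Complex.Gamma (((n + 1 : ℕ) : ℂ) + 3 / 2) = G10 at *
    field_simp
  have := tendsto_nhds_unique L4 tendsto_const_nhds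
  rwa [eq_comm, div_eq_one_iff_eq (RR_ne hl hm hν0)] at this


theorem dd_Gamma {ν : ℂ} (N : ℕ) (h : (N : ℝ) - 1 / 2 < ν.re) :
    dd (2 * ν) (2 * N) * Complex.Gamma (ν - N + 1 / 2) =
      4 ^ N * (-1) ^ N * (ascPochhammer ℂ N).eval (-ν) * Complex.Gamma (ν + 1 / 2) := by
  induction N with
  | zero => simp [dd]
  | succ N ih =>
    push_cast at h
    have ih := ih (by linarith)
    have hne : ν - N - 1 / 2 ≠ 0 := by
      intro h0
      have := congrArg Complex.re h0
      simp at this; linarith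
    have hG := Complex.Gamma_add_one _ hne
    rw [show ν - N - 1 / 2 + 1 = ν - N + 1 / 2 by ring] at hG
    rw [hG] at ih
    rw [show 2 * (N + 1) = 2 * N + 1 + 1 by ring, dd, dd, ascPochhammer_succ_eval,
      show ν - (N + 1 : ℕ) + 1 / 2 = ν - N - 1 / 2 by push_cast; ring]
    push_cast
    linear_combination (4 * (ν - N)) * ih

noncomputable def JQ (p m : ℕ) (l mu ν : ℂ) : ℂ :=
  EE l mu (fun s x => Ak (2 * ν) (s - x) * ((Qp p l).eval (s : ℂ) * (Qp m mu).eval (x : ℂ)))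

noncomputable def RQ (N p m : ℕ) (l mu ν : ℂ) : ℂ :=
  (-1) ^ m * (4 ^ N * (-1) ^ N * (ascPochhammer ℂ N).eval (-ν) * Complex.Gamma (ν + 1 / 2)) *
    (Complex.Gamma (1 / 2) * Complex.Gamma (l + p + 1 / 2) * Complex.Gamma (mu + m + 1 / 2) *
      Complex.Gamma (l + mu + 2 * ν + 1)) *
    ((Complex.Gamma (l + mu + ν + N + 1))⁻¹ * (Complex.Gamma (l + p + ν - N + 1))⁻¹ *
      (Complex.Gamma (mu + m + ν - N + 1))⁻¹)

theorem JQ_big {N p m : ℕ} (hN : m + p = 2 * N) {l mu ν : ℂ} (hl : -(1 / 2 : ℝ) < l.re) (hm : -(1 / 2 : ℝ) < mu.re)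
    (hν : (N : ℝ) + 1 / 2 < ν.re) : JQ p m l mu ν = RQ N p m l mu ν := by
  have hN' : (m : ℝ) + p = 2 * N := by exact_mod_cast hN
  have hNc : (m : ℂ) + p = 2 * N := by exact_mod_cast hN
  have m0 := m.cast_nonneg (α := ℝ)
  have p0 := p.cast_nonneg (α := ℝ)
  have hm' : -(1 / 2 : ℝ) < (mu + m).re := by simp; linarith
  have hl' : -(1 / 2 : ℝ) < (l + p).re := by simp; linarith
  have hre : (2 * ν).re = 2 * ν.re := by simp
  have hKc : ∀ j, j ≤ m + p → Continuous (Kd (2 * ν) j) := by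
    intro j hj
    have : (j : ℝ) ≤ m + p := by exact_mod_cast hj
    exact Kd_cont (by rw [hre]; linarith)
  have hKd : ∀ j, j < m + p → ∀ u, HasDerivAt (Kd (2 * ν) j) (Kd (2 * ν) (j + 1) u) u := by
    intro j hj u
    have : (j : ℝ) + 1 ≤ m + p := by exact_mod_cast hj
    exact Kd_deriv (by rw [hre]; linarith) u
  have hA : Ak (2 * ν) = Kd (2 * ν) 0 := by
    funext u; simp [Kd, dd]
  have c0 := hKc 0 (by omega)
  have cm := hKc m (by omega)
  have cmp := hKc (m + p) le_rfl
  have qp := cont_polyC (Qp p l)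
  have qm := cont_polyC (Qp m mu)
  have s1 : JQ p m l mu ν = EE l (mu + m) (fun s x => (-1) ^ m * Kd (2 * ν) m (s - x) * (Qp p l).eval (s : ℂ)) := by
    rw [JQ, hA, EE_iter hl hm, EE_iter hl hm']
    · congr 1; ext s
      congr 1
      have h := Q_ibp m mu (fun j x => (-1) ^ j * Kd (2 * ν) j (s - x)) hm ?_ ?_
      · simp only [pow_zero, one_mul] at h
        calc _ = (Qp p l).eval (s : ℂ) * ∫ x in (-1 : ℝ)..1, Kd (2 * ν) 0 (s - x) * (Qp m mu).eval (x : ℂ) * Wt mu x := by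
              rw [← intervalIntegral.integral_const_mul]; congr 1; ext x; ring
          _ = _ := by rw [h, ← intervalIntegral.integral_const_mul]; congr 1; ext x; ring
      · intro j hj x
        have := ((hKd j (by omega) (s - x)).scomp x ((hasDerivAt_id x).const_sub s)).const_mul ((-1 : ℂ) ^ j)
        refine this.congr_deriv ?_
        simp; ring
      · intro j hj
        have := hKc j (by omega)
        fun_prop
    · exact ((cm.comp (continuous_fst.sub continuous_snd)).const_mul _).mul (qp.comp continuous_fst)
    · exact (c0.comp (continuous_fst.sub continuous_snd)).mul ((qp.comp continuous_fst).mul (qm.comp continuous_snd))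
  have s2 : EE l (mu + m) (fun s x => (-1) ^ m * Kd (2 * ν) m (s - x) * (Qp p l).eval (s : ℂ)) =
      EE (l + p) (mu + m) (fun s x => (-1) ^ m * Kd (2 * ν) (m + p) (s - x)) := by
    rw [EE_iter' hl hm', EE_iter' hl' hm']
    · congr 1; ext x
      congr 1
      have h := Q_ibp p l (fun j s => (-1) ^ m * Kd (2 * ν) (m + j) (s - x)) hl ?_ ?_
      · simpa using h
      · intro j hj s
        have := ((hKd (m + j) (by omega) (s - x)).scomp s ((hasDerivAt_id s).sub_const x)).const_mul ((-1 : ℂ) ^ m)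
        refine this.congr_deriv ?_
        simp [add_assoc]
      · intro j hj
        have := hKc (m + j) (by omega)
        fun_prop
    · exact (cmp.comp (continuous_fst.sub continuous_snd)).const_mul _
    · exact ((cm.comp (continuous_fst.sub continuous_snd)).const_mul _).mul (qp.comp continuous_fst)
  have s3 : (fun s x : ℝ => (-1) ^ m * Kd (2 * ν) (m + p) (s - x)) =
      fun s x : ℝ => ((-1) ^ m * dd (2 * ν) (2 * N)) * Ak (2 * (ν - N)) (s - x) := by
    funext s x
    rw [hN, Kd, if_pos (even_two_mul N), show 2 * ν - ((2 * N : ℕ) : ℂ) = 2 * (ν - N) by push_cast; ring]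
    ring
  rw [s1, s2, s3, EE_smul, J_base hl' hm' (by simp; linarith), RR, RQ]
  rw [← dd_Gamma N (by linarith)]
  rw [show l + p + (mu + m) + 2 * (ν - N) + 1 = l + mu + 2 * ν + 1 by linear_combination hNc,
    show l + p + (mu + m) + (ν - N) + 1 = l + mu + ν + N + 1 by linear_combination hNc,
    show l + p + (ν - N) + 1 = l + p + ν - N + 1 by ring, show mu + m + (ν - N) + 1 = mu + m + ν - N + 1 by ring,
    div_eq_mul_inv, mul_inv, mul_inv]
  ring

theorem cpow_log_bound {ε M r : ℝ} (hε : 0 < ε) (hr0 : 0 ≤ r) (hr : r ≤ 2) {ν : ℂ} (h1 : ε ≤ ν.re) (h2 : ν.re ≤ M) :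
    ‖((r : ℝ) : ℂ) ^ (2 * ν) * (Complex.log (r : ℂ) * 2)‖ ≤ 2 * (1 / (2 * ε) + 2 * 2 ^ (2 * M)) := by
  have hb : (0 : ℝ) < 2 ^ (2 * M) := by positivity
  have hb' : 0 < 1 / (2 * ε) := by positivity
  rcases hr0.eq_or_lt with rfl | hpos
  · simp; positivity
  · rw [norm_mul, norm_mul, ← Complex.ofReal_log hr0, Complex.norm_real, Complex.norm_cpow_eq_rpow_re_of_pos hpos, Real.norm_eq_abs]
    have hre : (2 * ν).re = 2 * ν.re := by simp
    rw [hre]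
    have hn2 : ‖(2 : ℂ)‖ = 2 := by simp
    rw [hn2]
    rcases le_or_gt r 1 with hr1 | hr1
    · have a1 := Real.abs_log_mul_self_rpow_lt r (2 * ε) hpos hr1 (by linarith)
      rw [abs_mul, abs_of_pos (Real.rpow_pos_of_pos hpos _)] at a1
      have a2 : r ^ (2 * ν.re) ≤ r ^ (2 * ε) := Real.rpow_le_rpow_of_exponent_ge hpos hr1 (by linarith)
      have a3 := mul_le_mul_of_nonneg_left a2 (abs_nonneg (Real.log r))
      nlinarith
    · have a1 : |Real.log r| ≤ 2 := by
        rw [abs_of_nonneg (Real.log_nonneg hr1.le)]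
        linarith [Real.log_le_sub_one_of_pos hpos]
      have a2 : r ^ (2 * ν.re) ≤ 2 ^ (2 * M) := by
        calc r ^ (2 * ν.re) ≤ r ^ (2 * M) := Real.rpow_le_rpow_of_exponent_le hr1.le (by linarith)
          _ ≤ 2 ^ (2 * M) := Real.rpow_le_rpow hr0 hr (by linarith)
      have a3 := mul_le_mul a2 a1 (abs_nonneg _) hb.le
      nlinarith

theorem JQ_diff (p m : ℕ) {l mu : ℂ} (hl : -(1 / 2 : ℝ) < l.re) (hm : -(1 / 2 : ℝ) < mu.re) {ν : ℂ} (hν : 0 < ν.re) :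
    DifferentiableAt ℂ (JQ p m l mu) ν := by
  have qp := cont_polyC (Qp p l)
  have qm := cont_polyC (Qp m mu)
  have hPc : Continuous (fun z : ℝ × ℝ => (Qp p l).eval (z.1 : ℂ) * (Qp m mu).eval (z.2 : ℂ)) :=
    (qp.comp continuous_fst).mul (qm.comp continuous_snd)
  have hG := EE_integrable hl hm (F := fun s x => (Qp p l).eval (s : ℂ) * (Qp m mu).eval (x : ℂ)) hPc
  set G := fun z : ℝ × ℝ => (Qp p l).eval (z.1 : ℂ) * (Qp m mu).eval (z.2 : ℂ) * (Wt l z.1 * Wt mu z.2) with hGd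
  have hAc : ∀ w : ℂ, 0 < w.re → Continuous (fun z : ℝ × ℝ => Ak (2 * w) (z.1 - z.2)) := by
    intro w hw
    exact (Ak_cont (by simp; linarith)).comp (continuous_fst.sub continuous_snd)
  have hball : ∀ w ∈ Metric.ball ν (ν.re / 2), ν.re / 2 ≤ w.re ∧ w.re ≤ ν.re + ν.re / 2 := by
    intro w hw
    rw [Metric.mem_ball, Complex.dist_eq] at hw
    have := (Complex.abs_re_le_norm (w - ν)).trans hw.le
    rw [Complex.sub_re, abs_le] at this
    constructor <;> linarith [this.1, this.2]
  have h := hasDerivAt_integral_of_dominated_loc_of_deriv_le (𝕜 := ℂ) (μ := vI.prod vI) (x₀ := ν)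
    (F := fun w z => Ak (2 * w) (z.1 - z.2) * G z)
    (F' := fun w z => (Ak (2 * w) (z.1 - z.2) * (Complex.log ((|z.1 - z.2| : ℝ) : ℂ) * 2)) * G z)
    (s := Metric.ball ν (ν.re / 2))
    (bound := fun z => 2 * (1 / (2 * (ν.re / 2)) + 2 * 2 ^ (2 * (ν.re + ν.re / 2))) * ‖G z‖)
    (Metric.ball_mem_nhds _ (by linarith)) ?_ ?_ ?_ ?_ ?_ ?_
  · have h2 := h.2.differentiableAt
    have : JQ p m l mu = fun w => ∫ z, Ak (2 * w) (z.1 - z.2) * G z ∂(vI.prod vI) := by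
      funext w
      rw [JQ, EE]
      congr 1; ext z; simp only [hGd]; ring
    rwa [this]
  · filter_upwards [Metric.ball_mem_nhds ν (show 0 < ν.re / 2 by linarith)] with w hw
    exact ((hAc w (by linarith [(hball w hw).1])).aestronglyMeasurable).mul hG.1
  · have := EE_integrable hl hm (F := fun s x => Ak (2 * ν) (s - x) * ((Qp p l).eval (s : ℂ) * (Qp m mu).eval (x : ℂ)))
      ((hAc ν hν).mul hPc)
    refine this.congr (Eventually.of_forall fun z => ?_)
    simp only [hGd]; ring
  · refine AEStronglyMeasurable.mul (AEStronglyMeasurable.mul (hAc ν hν).aestronglyMeasurable ?_) hG.1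
    refine Measurable.aestronglyMeasurable ?_
    refine Measurable.mul_const (Complex.measurable_log.comp ?_) _
    exact Continuous.measurable (by fun_prop)
  · rw [vI_prod]
    refine ae_restrict_of_forall_mem (measurableSet_Ioc.prod measurableSet_Ioc) ?_
    intro z hz w hw
    rw [norm_mul]
    gcongr
    refine cpow_log_bound (by linarith) (abs_nonneg _) ?_ (hball w hw).1 (hball w hw).2
    have h1 := hz.1.1
    have h2 := hz.1.2
    have h3 := hz.2.1
    have h4 := hz.2.2
    rw [abs_le]; constructor <;> linarith
  · exact hG.norm.const_mul _
  · refine Eventually.of_forall fun z w hw => ?_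
    refine HasDerivAt.mul_const ?_ _
    have hw0 : 2 * w ≠ 0 := by
      have := (hball w hw).1
      intro h0
      have := congrArg Complex.re h0
      simp at this; linarith
    have h1 : HasDerivAt (fun w : ℂ => 2 * w) 2 w := by simpa using (hasDerivAt_id w).const_mul (2 : ℂ)
    have := h1.const_cpow (c := ((|z.1 - z.2| : ℝ) : ℂ)) (Or.inr hw0)
    refine this.congr_deriv ?_
    rw [Ak]; ring

theorem RQ_diff (N p m : ℕ) {l mu : ℂ} (hl : -(1 / 2 : ℝ) < l.re) (hm : -(1 / 2 : ℝ) < mu.re) {ν : ℂ} (hν : 0 < ν.re) :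
    DifferentiableAt ℂ (RQ N p m l mu) ν := by
  have g : ∀ (f : ℂ → ℂ), DifferentiableAt ℂ f ν → 0 < (f ν).re → DifferentiableAt ℂ (fun w => Complex.Gamma (f w)) ν := by
    intro f hf h0
    refine DifferentiableAt.comp ν (Complex.differentiableAt_Gamma _ ?_) hf
    intro n hn
    rw [hn] at h0
    have := n.cast_nonneg (α := ℝ)
    simp at h0; linarith
  have gi : ∀ (f : ℂ → ℂ), DifferentiableAt ℂ f ν → DifferentiableAt ℂ (fun w => (Complex.Gamma (f w))⁻¹) ν := by
    intro f hf
    exact DifferentiableAt.comp (g := fun s => (Complex.Gamma s)⁻¹) ν (Complex.differentiable_one_div_Gamma _) hf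
  have d1 := g (fun w => w + 1 / 2) (by fun_prop) (by simp; linarith)
  have d2 := g (fun w => l + mu + 2 * w + 1) (by fun_prop) (by simp; linarith)
  have d3 := gi (fun w => l + mu + w + N + 1) (by fun_prop)
  have d4 := gi (fun w => l + p + w - N + 1) (by fun_prop)
  have d5 := gi (fun w => mu + m + w - N + 1) (by fun_prop)
  have d6 : DifferentiableAt ℂ (fun w : ℂ => (ascPochhammer ℂ N).eval (-w)) ν :=
    ((ascPochhammer ℂ N).differentiable.comp differentiable_neg) ν
  unfold RQ
  exact ((((d6.const_mul _).mul d1).const_mul _).mul (d2.const_mul _)).mul ((d3.mul d4).mul d5)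

theorem JQ_eq {N p m : ℕ} (hN : m + p = 2 * N) {l mu ν : ℂ} (hl : -(1 / 2 : ℝ) < l.re) (hm : -(1 / 2 : ℝ) < mu.re)
    (hν : 0 < ν.re) : JQ p m l mu ν = RQ N p m l mu ν := by
  have hU : IsOpen {w : ℂ | 0 < w.re} := isOpen_lt continuous_const Complex.continuous_re
  have hpre : IsPreconnected {w : ℂ | 0 < w.re} := (convex_halfSpace_re_gt 0).isPreconnected
  have a1 : AnalyticOnNhd ℂ (JQ p m l mu) {w : ℂ | 0 < w.re} :=
    DifferentiableOn.analyticOnNhd (fun w hw => (JQ_diff p m hl hm hw).differentiableWithinAt) hU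
  have a2 : AnalyticOnNhd ℂ (RQ N p m l mu) {w : ℂ | 0 < w.re} :=
    DifferentiableOn.analyticOnNhd (fun w hw => (RQ_diff N p m hl hm hw).differentiableWithinAt) hU
  have hz : ((N : ℂ) + 1) ∈ {w : ℂ | 0 < w.re} := by simp; positivity
  refine a1.eqOn_of_preconnected_of_eventuallyEq a2 hpre hz ?_ hν
  have hO : IsOpen {w : ℂ | (N : ℝ) + 1 / 2 < w.re} := isOpen_lt continuous_const Complex.continuous_re
  filter_upwards [hO.mem_nhds (show (N : ℂ) + 1 ∈ _ by simp; norm_num)] with w hw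
  exact JQ_big hN hl hm hw


theorem stmt2 (lam mu ν b : ℂ) (ℓ m : ℕ) (hpar : Even (ℓ + m))
    (hlam : -(1 / 2 : ℝ) < lam.re) (hmu : -(1 / 2 : ℝ) < mu.re) (hν : 0 < ν.re)
    (hb : -1 < b.re) :
    (2 : ℤ) ∣ ((m : ℤ) - (ℓ : ℤ)) ∧
    (∫ s in (-1 : ℝ)..1, ∫ t in (-1 : ℝ)..1, ∫ y in (0 : ℝ)..1,
        ((|s - t * Real.sqrt y| : ℝ) : ℂ) ^ (2 * ν) *
          gegenbauer lam ℓ (s : ℂ) * gegenbauer mu m (t : ℂ) *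
          ((y : ℂ) ^ (mu + (m : ℂ) / 2) * ((1 - y : ℝ) : ℂ) ^ b) *
          ((1 - s ^ 2 : ℝ) : ℂ) ^ (lam - 1 / 2 : ℂ) *
          ((1 - t ^ 2 : ℝ) : ℂ) ^ (mu - 1 / 2 : ℂ)) =
      ((Real.sqrt Real.pi : ℂ) * (-1 : ℂ) ^ (((m : ℤ) - (ℓ : ℤ)) / 2) /
          ((Nat.factorial ℓ : ℂ) * (Nat.factorial m : ℂ))) *
        ((ascPochhammer ℂ ℓ).eval (2 * lam) * (ascPochhammer ℂ m).eval (2 * mu) *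
            (ascPochhammer ℂ ((ℓ + m) / 2)).eval (-ν) *
            Complex.Gamma (lam + 1 / 2) * Complex.Gamma (mu + 1 / 2) *
            Complex.Gamma (ν + 1 / 2) * Complex.Gamma (lam + mu + 2 * ν + b + 2) *
            Complex.Gamma (b + 1)) /
          (Complex.Gamma (lam + mu + ν + b + ((ℓ : ℂ) + (m : ℂ)) / 2 + 2) *
            Complex.Gamma (lam + ν + ((ℓ : ℂ) - (m : ℂ)) / 2 + 1) *
            Complex.Gamma (mu + ν + b - ((ℓ : ℂ) - (m : ℂ)) / 2 + 2)) := by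
  refine ⟨by obtain ⟨r, hr⟩ := hpar; omega, ?_⟩
  obtain ⟨N, hN0⟩ := hpar
  have hN : m + ℓ = 2 * N := by omega
  have hNc : (m : ℂ) + ℓ = 2 * N := by exact_mod_cast hN
  have hmu' : -(1 / 2 : ℝ) < (mu + b + 1).re := by simp; linarith
  have hk : Continuous (Ak (2 * ν)) := Ak_cont (by simp; linarith)
  have m0 := m.cast_nonneg (α := ℝ)
  have p0 := ℓ.cast_nonneg (α := ℝ)
  set K := Complex.Gamma (mu + m + 1 / 2) * Complex.Gamma (b + 1) / Complex.Gamma (mu + b + 1 + m + 1 / 2) with hK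
  have step : ∀ s : ℝ, (∫ t in (-1 : ℝ)..1, ∫ y in (0 : ℝ)..1,
        ((|s - t * Real.sqrt y| : ℝ) : ℂ) ^ (2 * ν) *
          gegenbauer lam ℓ (s : ℂ) * gegenbauer mu m (t : ℂ) *
          ((y : ℂ) ^ (mu + (m : ℂ) / 2) * ((1 - y : ℝ) : ℂ) ^ b) *
          ((1 - s ^ 2 : ℝ) : ℂ) ^ (lam - 1 / 2 : ℂ) *
          ((1 - t ^ 2 : ℝ) : ℂ) ^ (mu - 1 / 2 : ℂ)) =
      (cc ℓ lam * cc m mu * K) * ((∫ x in (-1 : ℝ)..1, Ak (2 * ν) (s - x) *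
        ((Qp ℓ lam).eval (s : ℂ) * (Qp m (mu + b + 1)).eval (x : ℂ)) * Wt (mu + b + 1) x) * Wt lam s) := by
    intro s
    have hr := reduce m hmu hb (fun x => Ak (2 * ν) (s - x)) (by fun_prop)
    rw [← hK] at hr
    have e1 : ∀ t y : ℝ, ((|s - t * Real.sqrt y| : ℝ) : ℂ) ^ (2 * ν) *
          gegenbauer lam ℓ (s : ℂ) * gegenbauer mu m (t : ℂ) *
          ((y : ℂ) ^ (mu + (m : ℂ) / 2) * ((1 - y : ℝ) : ℂ) ^ b) *
          ((1 - s ^ 2 : ℝ) : ℂ) ^ (lam - 1 / 2 : ℂ) *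
          ((1 - t ^ 2 : ℝ) : ℂ) ^ (mu - 1 / 2 : ℂ) =
        (cc ℓ lam * cc m mu * (Qp ℓ lam).eval (s : ℂ) * Wt lam s) * (Ak (2 * ν) (s - t * Real.sqrt y) *
      (((Qp m mu).eval (t : ℂ) * Wt mu t) * ((y : ℂ) ^ (mu + (m : ℂ) / 2) * ((1 - y : ℝ) : ℂ) ^ b))) := by
      intro t y
      rw [geg_eq ℓ lam hlam, geg_eq m mu hmu, Ak, Wt, Wt]
      ring
    simp only [e1, intervalIntegral.integral_const_mul]
    rw [hr]
    have e2 : ∀ x : ℝ, Ak (2 * ν) (s - x) * (K * ((Qp m (mu + b + 1)).eval (x : ℂ) * Wt (mu + b + 1) x)) =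
        K * (Ak (2 * ν) (s - x) * (Qp m (mu + b + 1)).eval (x : ℂ) * Wt (mu + b + 1) x) := by intro x; ring
    have e3 : ∀ x : ℝ, Ak (2 * ν) (s - x) * ((Qp ℓ lam).eval (s : ℂ) * (Qp m (mu + b + 1)).eval (x : ℂ)) * Wt (mu + b + 1) x =
        (Qp ℓ lam).eval (s : ℂ) * (Ak (2 * ν) (s - x) * (Qp m (mu + b + 1)).eval (x : ℂ) * Wt (mu + b + 1) x) := by intro x; ring
    simp only [e2, e3, intervalIntegral.integral_const_mul]
    ring
  simp only [step, intervalIntegral.integral_const_mul]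
  rw [← EE_iter hlam hmu' (F := fun s x => Ak (2 * ν) (s - x) *
        ((Qp ℓ lam).eval (s : ℂ) * (Qp m (mu + b + 1)).eval (x : ℂ)))
      ((hk.comp (continuous_fst.sub continuous_snd)).mul
        (((cont_polyC (Qp ℓ lam)).comp continuous_fst).mul ((cont_polyC (Qp m (mu + b + 1))).comp continuous_snd)))]
  have hJ := JQ_eq hN hlam hmu' hν
  rw [JQ] at hJ
  rw [hJ, RQ, hK]
  have c1 := cc_eq ℓ lam hlam
  have c2 := cc_eq m mu hmu
  have sgn : (-1 : ℂ) ^ (((m : ℤ) - (ℓ : ℤ)) / 2) = (-1) ^ m * (-1) ^ N := by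
    have : ((m : ℤ) - (ℓ : ℤ)) / 2 = (m : ℤ) - N := by omega
    rw [this, zpow_sub₀ (by norm_num), zpow_natCast, zpow_natCast, div_eq_mul_inv, ← inv_pow]
    norm_num
  have four : (4 : ℂ) ^ N = 2 ^ ℓ * 2 ^ m := by
    rw [← pow_add, show ℓ + m = 2 * N by omega, pow_mul]; norm_num
  have hsq : Complex.Gamma (1 / 2) = (Real.sqrt Real.pi : ℂ) := by
    rw [Complex.Gamma_one_half_eq, Real.sqrt_eq_rpow, Complex.ofReal_cpow Real.pi_pos.le]; norm_num
  have hhalf : (ℓ + m) / 2 = N := by omega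
  rw [sgn, four, hsq, hhalf]
  rw [show lam + (mu + b + 1) + 2 * ν + 1 = lam + mu + 2 * ν + b + 2 by ring,
    show lam + (mu + b + 1) + ν + N + 1 = lam + mu + ν + b + ((ℓ : ℂ) + (m : ℂ)) / 2 + 2 by linear_combination (-1 / 2) * hNc,
    show lam + ℓ + ν - N + 1 = lam + ν + ((ℓ : ℂ) - (m : ℂ)) / 2 + 1 by linear_combination (1 / 2) * hNc,
    show mu + b + 1 + m + ν - N + 1 = mu + ν + b - ((ℓ : ℂ) - (m : ℂ)) / 2 + 2 by linear_combination (1 / 2) * hNc]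
  have g1 : Complex.Gamma (mu + b + 1 + m + 1 / 2) ≠ 0 := by
    apply Complex.Gamma_ne_zero_of_re_pos; simp; linarith
  have f1 : (ℓ.factorial : ℂ) ≠ 0 := by exact_mod_cast ℓ.factorial_ne_zero
  have f2 : (m.factorial : ℂ) ≠ 0 := by exact_mod_cast m.factorial_ne_zero
  generalize Complex.Gamma (lam + mu + ν + b + ((ℓ : ℂ) + (m : ℂ)) / 2 + 2) = H1 at *
  generalize Complex.Gamma (lam + ν + ((ℓ : ℂ) - (m : ℂ)) / 2 + 1) = H2 at *
  generalize Complex.Gamma (mu + ν + b - ((ℓ : ℂ) - (m : ℂ)) / 2 + 2) = H3 at *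
  generalize Complex.Gamma (lam + mu + 2 * ν + b + 2) = H4 at *
  generalize Complex.Gamma (mu + b + 1 + m + 1 / 2) = H5 at *
  generalize Complex.Gamma (mu + m + 1 / 2) = H6 at *
  generalize Complex.Gamma (lam + ℓ + 1 / 2) = H7 at *
  generalize Complex.Gamma (lam + 1 / 2) = H8 at *
  generalize Complex.Gamma (mu + 1 / 2) = H9 at *
  generalize Complex.Gamma (ν + 1 / 2) = H10 at *
  generalize Complex.Gamma (b + 1) = H11 at *
  generalize (ascPochhammer ℂ N).eval (-ν) = P0 at *
  generalize (ascPochhammer ℂ ℓ).eval (2 * lam) = P1 at *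
  generalize (ascPochhammer ℂ m).eval (2 * mu) = P2 at *
  generalize (2 : ℂ) ^ ℓ = T1 at *
  generalize (2 : ℂ) ^ m = T2 at *
  generalize (ℓ.factorial : ℂ) = F1 at *
  generalize (m.factorial : ℂ) = F2 at *
  generalize (-1 : ℂ) ^ m = S1 at *
  generalize (-1 : ℂ) ^ N = S2 at *
  generalize (Real.sqrt Real.pi : ℂ) = SP at *
  generalize cc ℓ lam = C1 at *
  generalize cc m mu = C2 at *
  have d1 : C1 * T1 * H7 = P1 * H8 / F1 := by
    rw [eq_div_iff f1, ← c1]; ring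
  have d2 : C2 * T2 * H6 = P2 * H9 / F2 := by
    rw [eq_div_iff f2, ← c2]; ring
  have lhs : C1 * C2 * (H6 * H11 / H5) * (S1 * (T1 * T2 * S2 * P0 * H10) * (SP * H7 * H5 * H4) * (H1⁻¹ * H2⁻¹ * H3⁻¹)) =
      (C1 * T1 * H7) * (C2 * T2 * H6) * (H11 * S1 * S2 * P0 * H10 * SP * H4 * (H1⁻¹ * H2⁻¹ * H3⁻¹)) * (H5 * H5⁻¹) := by
    rw [div_eq_mul_inv]; ring
  rw [lhs, d1, d2, mul_inv_cancel₀ g1, mul_one]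
  simp only [div_eq_mul_inv, mul_inv]
  ring
end

section
/- Suppose a, b, c ∈ ℂ satisfy Re a > 0, Re b > 0 and Re c > 1/2. Then for every x with −1 ≤ x ≤ 1, ∫_{−1}^1 ∫_{−1}^1 (s − xt)_+^{2c−1} (1 − s²)^{a−1} (1 − t²)^{b−1} ds dt = (√π · Γ(a) Γ(b) Γ(c) / (2 Γ(a+c) Γ(b+1/2))) · ₂F₁(−c + 1/2, −a − c + 1; b + 1/2; x²). -/
open MeasureTheory intervalIntegral

/-- `y_+^α := y^α` for `y > 0`, `0` otherwise. -/
noncomputable def posPow (y : ℝ) (α : ℂ) : ℂ := if 0 < y then (y : ℂ) ^ α else 0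

/-- The Gauss hypergeometric function `₂F₁(a,b;c;z)` as a series. -/
noncomputable def hyp2F1 (a b c z : ℂ) : ℂ :=
  ∑' n : ℕ, ((ascPochhammer ℂ n).eval a * (ascPochhammer ℂ n).eval b /
    ((ascPochhammer ℂ n).eval c * (Nat.factorial n : ℂ))) * z ^ n

/-- Pochhammer symbol. -/
noncomputable def poch (n : ℕ) (a : ℂ) : ℂ := (ascPochhammer ℂ n).eval a

/-- Gauss coefficient. -/
noncomputable def hco (a b c : ℂ) (n : ℕ) : ℂ := poch n a * poch n b / (poch n c * (Nat.factorial n : ℂ))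

/-- Binomial coefficient. -/
noncomputable def pco (l : ℂ) (n : ℕ) : ℂ := poch n l / (Nat.factorial n : ℂ)

lemma poch_zero (a : ℂ) : poch 0 a = 1 := by simp [poch]

lemma poch_succ (n : ℕ) (a : ℂ) : poch (n+1) a = poch n a * (a + n) := by
  simp [poch, ascPochhammer_succ_eval]

lemma poch_ne_zero {c : ℂ} (hc : 0 < c.re) (n : ℕ) : poch n c ≠ 0 := by
  induction n with
  | zero => simp [poch_zero]
  | succ n ih =>
    rw [poch_succ]
    refine mul_ne_zero ih ?_
    intro h
    have := congrArg Complex.re h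
    simp at this
    have h2 : (0:ℝ) ≤ n := Nat.cast_nonneg n
    linarith

lemma hco_succ {a b c : ℂ} (hc : 0 < c.re) (n : ℕ) :
    (n + 1 : ℂ) * (c + n) * hco a b c (n+1) = (a + n) * (b + n) * hco a b c n := by
  have h1 := poch_ne_zero hc n
  have h2 := poch_ne_zero hc (n+1)
  have h3 : (n + 1 : ℂ) ≠ 0 := by exact_mod_cast Nat.succ_ne_zero n
  have h4 : (n.factorial : ℂ) ≠ 0 := by exact_mod_cast Nat.factorial_ne_zero n
  rw [poch_succ] at h2
  have h5 : c + n ≠ 0 := right_ne_zero_of_mul h2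
  unfold hco
  rw [poch_succ, poch_succ, poch_succ, Nat.factorial_succ]
  push_cast
  field_simp

lemma pco_succ (l : ℂ) (n : ℕ) : (n + 1 : ℂ) * pco l (n+1) = (l + n) * pco l n := by
  have h3 : (n + 1 : ℂ) ≠ 0 := by exact_mod_cast Nat.succ_ne_zero n
  have h4 : (n.factorial : ℂ) ≠ 0 := by exact_mod_cast Nat.factorial_ne_zero n
  unfold pco
  rw [poch_succ, Nat.factorial_succ]
  push_cast
  field_simp

open PowerSeries in
lemma ode_coeff (a b c : ℂ) (f : PowerSeries ℂ) (n : ℕ) :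
    coeff n (X * (1 - X) * derivative ℂ (derivative ℂ f)
      + (C c - C (a+b+1) * X) * derivative ℂ f - C (a*b) * f) =
    (n + 1 : ℂ) * (c + n) * coeff (n+1) f - (a + n) * (b + n) * coeff n f := by
  have e : X * (1 - X) * derivative ℂ (derivative ℂ f)
      + (C c - C (a+b+1) * X) * derivative ℂ f - C (a*b) * f =
      X * derivative ℂ (derivative ℂ f) - X * (X * derivative ℂ (derivative ℂ f))
      + C c * derivative ℂ f - C (a+b+1) * (X * derivative ℂ f) - C (a*b) * f := by ring
  rw [e]
  have hk : ∃ k : ℂ, k = a + b + 1 := ⟨_, rfl⟩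
  obtain ⟨k, hk⟩ := hk
  rw [← hk]
  rcases n with _ | n
  · simp only [map_sub, map_add, coeff_C_mul, coeff_derivative, coeff_zero_X_mul]
    push_cast
    ring
  · rcases n with _ | n
    · simp only [map_sub, map_add, coeff_succ_X_mul, coeff_C_mul, coeff_derivative,
        coeff_zero_X_mul]
      subst hk
      push_cast
      ring
    · simp only [map_sub, map_add, coeff_succ_X_mul, coeff_C_mul, coeff_derivative]
      subst hk
      push_cast
      ring

open PowerSeries in
lemma euler_coeff {a b c : ℂ} (hc : 0 < c.re) (n : ℕ) :
    ∑ kl ∈ Finset.HasAntidiagonal.antidiagonal n, pco (c - a - b) kl.1 * hco a b c kl.2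
      = hco (c - a) (c - b) c n := by
  set l := c - a - b with hl
  set P : PowerSeries ℂ := PowerSeries.mk (pco l) with hP
  set F : PowerSeries ℂ := PowerSeries.mk (hco a b c) with hF
  have oF : X * (1 - X) * derivative ℂ (derivative ℂ F)
      + (C c - C (a+b+1) * X) * derivative ℂ F - C (a*b) * F = 0 := by
    ext m
    rw [ode_coeff]
    simp [hF, hco_succ hc m]
  have oP : (1 - X) * derivative ℂ P = C l * P := by
    ext m
    have e : (1 - X) * derivative ℂ P = derivative ℂ P - X * derivative ℂ P := by ring
    rw [e]
    rcases m with _ | m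
    · have := pco_succ l 0
      simp only [map_sub, coeff_zero_X_mul, coeff_C_mul, coeff_derivative, hP, coeff_mk]
      push_cast at this ⊢
      linear_combination this
    · have := pco_succ l (m+1)
      simp only [map_sub, coeff_succ_X_mul, coeff_C_mul, coeff_derivative, hP, coeff_mk]
      push_cast at this ⊢
      linear_combination this
  have oP2 : (1 - X) * derivative ℂ (derivative ℂ P) = (C l + 1) * derivative ℂ P := by
    have := congrArg (derivative ℂ) oP
    simp [Derivation.leibniz] at this
    linear_combination this
  have oG : X * (1 - X) * derivative ℂ (derivative ℂ (P * F))
      + (C c - C ((c-a)+(c-b)+1) * X) * derivative ℂ (P*F) - C ((c-a)*(c-b)) * (P*F) = 0 := by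
    have hne : (1 - X : PowerSeries ℂ) ≠ 0 := by
      intro h
      have := congrArg (coeff 0) h
      simp at this
    apply (mul_eq_zero.mp _).resolve_left hne
    have el : (C l : PowerSeries ℂ) = C c - C a - C b := by simp [hl]
    rw [el] at oP oP2
    simp only [Derivation.leibniz, map_add, smul_eq_mul, map_mul, map_sub, map_one] at oF oP oP2 ⊢
    linear_combination (1 - X) * P * oF + X * (1 - X) * F * oP2 +
      (X * (C c - C a - C b + 1) * F + 2 * X * (1 - X) * derivative ℂ F
        + (C c - (2 * C c - C a - C b + 1) * X) * F) * oP
  have hrec : ∀ m : ℕ, (m + 1 : ℂ) * (c + m) * coeff (m+1) (P*F) =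
      ((c-a) + m) * ((c-b) + m) * coeff m (P*F) := by
    intro m
    have := ode_coeff (c-a) (c-b) c (P*F) m
    rw [oG] at this
    simp only [map_zero] at this
    linear_combination -this
  have key : ∀ m : ℕ, coeff m (P*F) = hco (c-a) (c-b) c m := by
    intro m
    induction m with
    | zero => simp [hP, hF, pco, hco, poch_zero]
    | succ m ih =>
      have r1 := hrec m
      have r2 := hco_succ (a := c-a) (b := c-b) hc m
      rw [ih, ← r2] at r1
      have h3 : (m + 1 : ℂ) ≠ 0 := by exact_mod_cast Nat.succ_ne_zero m
      have h2 := poch_ne_zero hc (m+1)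
      rw [poch_succ] at h2
      exact mul_left_cancel₀ (mul_ne_zero h3 (right_ne_zero_of_mul h2)) r1
  rw [← key n, coeff_mul]
  simp [hP, hF]
lemma hasSum_pco (l : ℂ) {z : ℂ} (hz : ‖z‖ < 1) :
    HasSum (fun n => pco l n * z ^ n) ((1 - z) ^ (-l)) := by
  have h := (Complex.one_div_one_sub_cpow_hasFPowerSeriesOnBall_zero l).hasSum
    (y := z) (by simpa [← ENNReal.ofReal_one, Metric.eball_ofReal] using hz)
  have hcoef : ∀ n : ℕ, Ring.choose (l + n - 1) n = pco l n := by
    intro n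
    have h4 : (n.factorial : ℂ) ≠ 0 := by exact_mod_cast Nat.factorial_ne_zero n
    rw [← Ring.multichoose_eq, pco, eq_div_iff h4]
    have := Ring.factorial_nsmul_multichoose_eq_ascPochhammer l n
    rw [nsmul_eq_mul, Polynomial.ascPochhammer_smeval_eq_eval] at this
    rw [poch, ← this, mul_comm]
  simp only [FormalMultilinearSeries.ofScalars_apply_eq, hcoef, zero_add, smul_eq_mul] at h
  rw [Complex.cpow_neg, ← one_div]
  exact h

lemma pco_even (p : ℂ) (n : ℕ) : pco p (2 * n) = hco (p/2) ((p+1)/2) (1/2) n := by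
  have hc : 0 < (1/2 : ℂ).re := by norm_num
  induction n with
  | zero => simp [pco, hco, poch_zero]
  | succ n ih =>
    have h1 := hco_succ (a := p/2) (b := (p+1)/2) hc n
    have h2 := pco_succ p (2*n)
    have h3 := pco_succ p (2*n+1)
    have h4 : (n + 1 : ℂ) ≠ 0 := by exact_mod_cast Nat.succ_ne_zero n
    have h5 : (2 * n + 1 : ℂ) ≠ 0 := by exact_mod_cast Nat.succ_ne_zero (2*n)
    have h6 : (n + 1 : ℂ) * (1/2 + n) ≠ 0 := by
      refine mul_ne_zero h4 ?_
      intro h; apply h5; linear_combination 2 * h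
    apply mul_left_cancel₀ h6
    rw [h1, ← ih, show 2 * (n+1) = 2*n+1+1 by ring]
    push_cast at h2 h3
    linear_combination (p + 2*n+1) / 4 * h2 + (2*n+1)/4 * h3

lemma hasSum_even (p : ℂ) {z : ℂ} (hz : ‖z‖ < 1) :
    HasSum (fun n => hco (p/2) ((p+1)/2) (1/2) n * z ^ (2*n))
      (((1 - z) ^ (-p) + (1 + z) ^ (-p)) / 2) := by
  have h1 := hasSum_pco p hz
  have h2 := hasSum_pco p (z := -z) (by simpa using hz)
  have h3 := (h1.add h2).div_const 2
  rw [sub_neg_eq_add] at h3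
  have hinj : Function.Injective (fun n : ℕ => 2 * n) := fun a b h => by simpa using h
  rw [← hinj.hasSum_iff] at h3
  · refine Eq.mp (congrArg (fun f => HasSum f _) (funext fun n => ?_)) h3
    show (pco p (2*n) * z^(2*n) + pco p (2*n) * (-z)^(2*n)) / 2 = _
    rw [pco_even]
    rw [Even.neg_pow (by simp)]
    ring
  · intro n hn
    have : Odd n := by
      rw [← Nat.not_even_iff_odd]
      rintro ⟨k, hk⟩
      exact hn ⟨k, by simp only; omega⟩
    rw [this.neg_pow]
    ring

lemma poch_eq_prod (n : ℕ) (s : ℂ) : poch n s = ∏ j ∈ Finset.range n, (s + j) := by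
  induction n with
  | zero => simp [poch_zero]
  | succ n ih => rw [poch_succ, Finset.prod_range_succ, ih]

open Filter Asymptotics in
lemma isBigO_pow (s : ℂ) :
    (fun n : ℕ => (n : ℂ) ^ s * n.factorial) =Θ[atTop]
      fun n : ℕ => (n : ℝ) ^ s.re * (n.factorial : ℝ) := by
  apply IsTheta.of_norm_eventuallyEq_norm
  filter_upwards [eventually_gt_atTop 0] with n hn
  simp only [norm_mul, Complex.norm_natCast, Real.norm_natCast]
  rw [Complex.norm_natCast_cpow_of_pos hn, Real.norm_of_nonneg (by positivity)]

open Filter Asymptotics in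
lemma poch_bigO (s : ℂ) : (fun n : ℕ => poch (n+1) s) =O[atTop]
      fun n : ℕ => (n : ℝ) ^ s.re * (n.factorial : ℝ) := by
  by_cases hs : Complex.Gamma s = 0
  · obtain ⟨m, hm⟩ := (Complex.Gamma_eq_zero_iff s).mp hs
    have : (fun n : ℕ => poch (n+1) s) =ᶠ[atTop] fun _ => (0:ℂ) := by
      filter_upwards [eventually_ge_atTop m] with n hn
      rw [poch_eq_prod]
      apply Finset.prod_eq_zero (i := m) (by simp; omega)
      rw [hm]; ring
    exact this.trans_isBigO (isBigO_zero _ _)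
  · have h1 := (Complex.GammaSeq_tendsto_Gamma s).inv₀ hs
    have h2 := h1.isBigO_one ℝ
    have h3 := h2.mul (isBigO_pow s).1
    refine (EventuallyEq.trans_isBigO ?_ (h3.congr_right (by intro n; rw [one_mul])))
    filter_upwards [eventually_gt_atTop 0] with n hn
    rw [poch_eq_prod, Complex.GammaSeq]
    have h4 : (n.factorial : ℂ) ≠ 0 := by exact_mod_cast Nat.factorial_ne_zero n
    have h5 : (n : ℂ) ^ s ≠ 0 := by
      rw [Ne, Complex.cpow_eq_zero_iff];
      rintro ⟨h, -⟩
      exact hn.ne' (by exact_mod_cast h)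
    rw [inv_div]
    field_simp

open Filter Asymptotics in
lemma poch_inv_bigO {s : ℂ} : (fun n : ℕ => (poch (n+1) s)⁻¹) =O[atTop]
      fun n : ℕ => ((n : ℝ) ^ s.re * (n.factorial : ℝ))⁻¹ := by
  have h1 := (Complex.GammaSeq_tendsto_Gamma s)
  have h2 := h1.isBigO_one ℝ
  have h3 := h2.mul (isBigO_pow s).inv.1
  refine (EventuallyEq.trans_isBigO ?_ (h3.congr_right (by intro n; rw [one_mul])))
  filter_upwards [eventually_gt_atTop 0] with n hn
  rw [poch_eq_prod, Complex.GammaSeq]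
  have h4 : (n.factorial : ℂ) ≠ 0 := by exact_mod_cast Nat.factorial_ne_zero n
  have h5 : (n : ℂ) ^ s ≠ 0 := by
    rw [Ne, Complex.cpow_eq_zero_iff];
    rintro ⟨h, -⟩
    exact hn.ne' (by exact_mod_cast h)
  field_simp

open Filter Asymptotics in
lemma summable_hco {a b c : ℂ} (h : a.re + b.re < c.re) : Summable (hco a b c) := by
  rw [← summable_nat_add_iff 1]
  have hs : Summable (fun n : ℕ => (n : ℝ) ^ (a.re + b.re - c.re - 1)) := by
    rw [Real.summable_nat_rpow]; linarith
  refine summable_of_isBigO_nat hs ?_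
  have hf : (fun n : ℕ => (((n+1).factorial : ℂ))⁻¹) =O[atTop]
      fun n : ℕ => ((n : ℝ) * n.factorial)⁻¹ := by
    apply IsBigO.of_bound 1
    filter_upwards [eventually_gt_atTop 0] with n hn
    have hn' : (0:ℝ) < n := by exact_mod_cast hn
    have h4 : 0 < (n.factorial : ℝ) := by exact_mod_cast Nat.factorial_pos n
    rw [norm_inv, Complex.norm_natCast, Real.norm_of_nonneg (by positivity), one_mul,
      Nat.factorial_succ]
    push_cast
    gcongr
    linarith
  have h1 := (((poch_bigO a).mul (poch_bigO b)).mul (poch_inv_bigO (s := c))).mul hf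
  refine (h1.congr_left (fun n => ?_)).trans (EventuallyEq.isBigO ?_)
  · rw [hco, div_eq_mul_inv, mul_inv, mul_assoc, mul_assoc]
  · filter_upwards [eventually_gt_atTop 0] with n hn
    have hn' : (0:ℝ) < n := by exact_mod_cast hn
    have h4 : 0 < (n.factorial : ℝ) := by exact_mod_cast Nat.factorial_pos n
    rw [Real.rpow_sub hn', Real.rpow_sub hn', Real.rpow_add hn', Real.rpow_one]
    have := Real.rpow_pos_of_pos hn' c.re
    field_simp
lemma cpow_pos_eq {r : ℝ} (hr : 0 < r) (s : ℂ) :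
    (r : ℂ) ^ s = Complex.exp (Real.log r * s) := by
  rw [Complex.cpow_def_of_ne_zero (by exact_mod_cast hr.ne'), Complex.ofReal_log hr.le]

lemma ofReal_eq_exp {r : ℝ} (hr : 0 < r) : (r : ℂ) = Complex.exp (Real.log r) := by
  rw [← Complex.ofReal_exp, Real.exp_log hr]

/-- weight. -/
noncomputable def wt (c a : ℂ) (u : ℝ) : ℂ :=
  (u : ℂ) ^ (2 * c - 1) * ((1 - u ^ 2 : ℝ) : ℂ) ^ (a - 1)

lemma sq_image : (fun u : ℝ => u ^ 2) '' Set.Ioo 0 1 = Set.Ioo 0 1 := by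
  ext v
  constructor
  · rintro ⟨u, ⟨h0, h1⟩, rfl⟩
    exact ⟨by positivity, by simp only; nlinarith⟩
  · rintro ⟨h0, h1⟩
    exact ⟨Real.sqrt v, ⟨Real.sqrt_pos.mpr h0, by rw [Real.sqrt_lt' one_pos]; simpa using h1⟩,
      Real.sq_sqrt h0.le⟩

lemma wt_point (c a : ℂ) {u : ℝ} (hu : u ∈ Set.Ioo (0:ℝ) 1) :
    |2 * u| • (((u ^ 2 : ℝ) : ℂ) ^ (c - 1) * (1 - ((u ^ 2 : ℝ) : ℂ)) ^ (a - 1)) = 2 * wt c a u := by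
  obtain ⟨h0, h1⟩ := hu
  have h2 : 0 < 1 - u ^ 2 := by nlinarith
  rw [abs_of_pos (by positivity), Complex.real_smul, wt,
    show (1 - ((u ^ 2 : ℝ) : ℂ)) = ((1 - u ^ 2 : ℝ) : ℂ) by push_cast; ring]
  rw [← mul_assoc, ← mul_assoc]
  congr 1
  rw [Complex.ofReal_mul, mul_assoc]
  congr 1
  rw [cpow_pos_eq (by positivity), cpow_pos_eq h0, Real.log_pow]
  nth_rw 1 [ofReal_eq_exp h0]
  rw [← Complex.exp_add]
  congr 1
  push_cast
  ring

lemma sq_deriv (u : ℝ) : HasDerivWithinAt (fun u : ℝ => u ^ 2) (2 * u) (Set.Ioo 0 1) u := by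
  simpa using (hasDerivAt_pow 2 u).hasDerivWithinAt

lemma sq_inj : Set.InjOn (fun u : ℝ => u ^ 2) (Set.Ioo 0 1) := by
  intro x hx y hy h
  exact (pow_left_inj₀ hx.1.le hy.1.le two_ne_zero).mp h

lemma wt_integrable {c a : ℂ} (hc : 0 < c.re) (ha : 0 < a.re) :
    IntegrableOn (wt c a) (Set.Ioo 0 1) := by
  have h := Complex.betaIntegral_convergent hc ha
  rw [intervalIntegrable_iff_integrableOn_Ioo_of_le zero_le_one, ← sq_image,
    integrableOn_image_iff_integrableOn_abs_deriv_smul measurableSet_Ioo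
      (fun u _ => sq_deriv u) sq_inj] at h
  rw [integrableOn_congr_fun (fun u hu => wt_point c a hu) measurableSet_Ioo] at h
  have := h.const_mul (1/2 : ℂ)
  refine this.congr (Filter.Eventually.of_forall fun u => ?_)
  simp only
  ring

lemma wt_integral (c a : ℂ) :
    ∫ u in Set.Ioo (0:ℝ) 1, wt c a u = Complex.betaIntegral c a / 2 := by
  rw [Complex.betaIntegral, intervalIntegral.integral_of_le zero_le_one,
    integral_Ioc_eq_integral_Ioo]
  conv_rhs => rw [← sq_image]
  rw [integral_image_eq_integral_abs_deriv_smul measurableSet_Ioo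
      (fun u _ => sq_deriv u) sq_inj]
  rw [setIntegral_congr_fun measurableSet_Ioo (fun u hu => wt_point c a hu)]
  rw [MeasureTheory.integral_const_mul]
  ring

lemma wt_pow (c a : ℂ) (n : ℕ) :
    ∫ u in Set.Ioo (0:ℝ) 1, (u : ℂ) ^ (2 * n) * wt c a u = Complex.betaIntegral (c + n) a / 2 := by
  rw [← wt_integral]
  apply setIntegral_congr_fun measurableSet_Ioo
  intro u hu
  have : (u : ℂ) ≠ 0 := by exact_mod_cast hu.1.ne'
  simp only [wt]
  rw [← mul_assoc, show 2 * (c + n) - 1 = ((2 * n : ℕ) : ℂ) + (2 * c - 1) by push_cast; ring,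
    Complex.cpow_add _ _ this, Complex.cpow_natCast]

lemma Gamma_add_nat' {s : ℂ} (hs : 0 < s.re) (n : ℕ) :
    Complex.Gamma (s + n) = poch n s * Complex.Gamma s := by
  induction n with
  | zero => simp [poch_zero]
  | succ n ih =>
    have : s + n ≠ 0 := by
      have := poch_ne_zero hs (n+1)
      rw [poch_succ] at this
      exact right_ne_zero_of_mul this
    rw [Nat.cast_succ, ← add_assoc, Complex.Gamma_add_one _ this, ih, poch_succ]
    ring

lemma beta_eq {c a : ℂ} (hc : 0 < c.re) (ha : 0 < a.re) :
    Complex.betaIntegral c a = Complex.Gamma c * Complex.Gamma a / Complex.Gamma (c + a) := by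
  have h : Complex.Gamma (c + a) ≠ 0 :=
    Complex.Gamma_ne_zero_of_re_pos (by simp; linarith)
  rw [Complex.Gamma_mul_Gamma_eq_betaIntegral hc ha]
  field_simp

lemma beta_add_nat {c a : ℂ} (hc : 0 < c.re) (ha : 0 < a.re) (n : ℕ) :
    Complex.betaIntegral (c + n) a = Complex.betaIntegral c a * (poch n c / poch n (c + a)) := by
  have h3 : 0 < (c + n).re := by
    simp
    have : (0:ℝ) ≤ n := Nat.cast_nonneg n
    linarith
  have hca : 0 < (c + a).re := by simp; linarith
  rw [beta_eq hc ha, beta_eq h3 ha, show c + n + a = (c + a) + n by ring, Gamma_add_nat' hc,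
    Gamma_add_nat' hca]
  have := poch_ne_zero hca n
  have h : Complex.Gamma (c + a) ≠ 0 :=
    Complex.Gamma_ne_zero_of_re_pos hca
  field_simp

lemma interchange {c a : ℂ} (hc : 0 < c.re) (ha : 0 < a.re) (k : ℕ → ℂ)
    (hk : Summable k) :
    HasSum (fun n => k n * (Complex.betaIntegral c a * (poch n c / poch n (c + a)) / 2))
      (∫ u in Set.Ioo (0:ℝ) 1, (∑' n, k n * (u:ℂ) ^ (2 * n)) * wt c a u) := by
  have hw := wt_integrable hc ha
  have hbd : ∀ n : ℕ, ∀ᵐ (u : ℝ) ∂(volume.restrict (Set.Ioo (0:ℝ) 1)),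
      ‖k n * (u:ℂ) ^ (2 * n)‖ ≤ ‖k n‖ := by
    intro n
    rw [ae_restrict_iff' measurableSet_Ioo]
    refine Filter.Eventually.of_forall fun u hu => ?_
    rw [norm_mul, norm_pow, Complex.norm_real, Real.norm_of_nonneg hu.1.le]
    exact mul_le_of_le_one_right (norm_nonneg _) (pow_le_one₀ hu.1.le hu.2.le)
  have hint : ∀ n : ℕ, Integrable (fun u : ℝ => k n * (u:ℂ) ^ (2 * n) * wt c a u)
      (volume.restrict (Set.Ioo (0:ℝ) 1)) := fun n =>
    Integrable.bdd_mul (c := ‖k n‖) hw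
      (by fun_prop) (hbd n)
  have h := hasSum_integral_of_summable_integral_norm (F := fun (n : ℕ) (u : ℝ) =>
    k n * (u:ℂ) ^ (2 * n) * wt c a u) (μ := volume.restrict (Set.Ioo (0:ℝ) 1)) hint ?_
  · simp_rw [tsum_mul_right] at h
    refine Eq.mp (congrArg (fun f => HasSum f _) (funext fun n => ?_)) h
    simp_rw [mul_assoc]
    rw [MeasureTheory.integral_const_mul, wt_pow, beta_add_nat hc ha]
  · refine Summable.of_nonneg_of_le (fun n => integral_nonneg fun _ => norm_nonneg _) (fun n => ?_)
      (hk.norm.mul_right (∫ u in Set.Ioo (0:ℝ) 1, ‖wt c a u‖))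
    rw [← MeasureTheory.integral_const_mul]
    refine integral_mono_ae (hint n).norm (hw.norm.const_mul _) ?_
    filter_upwards [hbd n] with u hu
    rw [norm_mul]
    exact mul_le_mul_of_nonneg_right hu (norm_nonneg _)
/-- inner integral. -/
noncomputable def GG (a c : ℂ) (y : ℝ) : ℂ :=
  ∫ s in Set.Ioc (-1:ℝ) 1, posPow (s - y) (2 * c - 1) * ((1 - s ^ 2 : ℝ) : ℂ) ^ (a - 1)

lemma mob_image {y : ℝ} (h1 : -1 < y) (h2 : y < 1) :
    (fun u : ℝ => (y + u) / (1 + y * u)) '' Set.Ioo 0 1 = Set.Ioo y 1 := by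
  ext s
  constructor
  · rintro ⟨u, ⟨hu0, hu1⟩, rfl⟩
    have hD : 0 < 1 + y * u := by nlinarith
    refine ⟨?_, ?_⟩
    · simp only
      rw [lt_div_iff₀ hD]
      nlinarith [mul_pos hu0 (mul_pos (sub_pos.2 h2) (by linarith : 0 < 1 + y))]
    · simp only
      rw [div_lt_one hD]
      nlinarith
  · rintro ⟨hs0, hs1⟩
    have hD : 0 < 1 - y * s := by nlinarith
    refine ⟨(s - y) / (1 - y * s), ⟨div_pos (by linarith) hD, ?_⟩, ?_⟩
    · rw [div_lt_one hD]; nlinarith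
    · have hE : 0 < 1 - y ^ 2 := by nlinarith
      have e1 : 1 + y * ((s - y) / (1 - y * s)) = (1 - y ^ 2) / (1 - y * s) := by
        field_simp; ring
      have e2 : y + (s - y) / (1 - y * s) = s * (1 - y ^ 2) / (1 - y * s) := by
        field_simp; ring
      simp only
      rw [e1, e2, div_div_div_cancel_right₀ hD.ne', mul_div_assoc, div_self hE.ne', mul_one]

lemma GG_eq (a c : ℂ) {y : ℝ} (h1 : -1 < y) (h2 : y < 1) :
    GG a c y = ((1 - y ^ 2 : ℝ) : ℂ) ^ (a + 2 * c - 1) *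
      ∫ u in Set.Ioo (0:ℝ) 1, ((1 + y * u : ℝ) : ℂ) ^ (-(2 * a + 2 * c - 1)) * wt c a u := by
  have hE : 0 < 1 - y ^ 2 := by nlinarith
  have e1 : GG a c y = ∫ s in Set.Ioo y 1,
      ((s - y : ℝ) : ℂ) ^ (2 * c - 1) * ((1 - s ^ 2 : ℝ) : ℂ) ^ (a - 1) := by
    rw [GG, ← integral_Ioc_eq_integral_Ioo, ← MeasureTheory.integral_indicator measurableSet_Ioc,
      ← MeasureTheory.integral_indicator measurableSet_Ioc]
    congr 1
    funext s
    by_cases hs : s ∈ Set.Ioc y 1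
    · rw [Set.indicator_of_mem hs, Set.indicator_of_mem (by exact ⟨by linarith [hs.1], hs.2⟩),
        posPow, if_pos (by linarith [hs.1])]
    · rw [Set.indicator_of_notMem hs]
      by_cases hs' : s ∈ Set.Ioc (-1) 1
      · have : ¬ (0 < s - y) := fun h => hs ⟨by linarith, hs'.2⟩
        rw [Set.indicator_of_mem hs', posPow, if_neg this, zero_mul]
      · rw [Set.indicator_of_notMem hs']
  rw [e1, ← mob_image h1 h2, integral_image_eq_integral_abs_deriv_smul
    (f' := fun u => (1 - y ^ 2) / (1 + y * u) ^ 2) measurableSet_Ioo]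
  · rw [← MeasureTheory.integral_const_mul]
    apply setIntegral_congr_fun measurableSet_Ioo
    rintro u ⟨hu0, hu1⟩
    have hD : 0 < 1 + y * u := by nlinarith
    have hu2 : 0 < 1 - u ^ 2 := by nlinarith
    have f1 : (y + u) / (1 + y * u) - y = u * (1 - y ^ 2) / (1 + y * u) := by
      field_simp; ring
    have f2 : 1 - ((y + u) / (1 + y * u)) ^ 2 = (1 - y ^ 2) * (1 - u ^ 2) / (1 + y * u) ^ 2 := by
      field_simp; ring
    simp only
    rw [f1, f2, abs_of_pos (by positivity), Complex.real_smul, wt,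
      cpow_pos_eq (by positivity), cpow_pos_eq (by positivity), cpow_pos_eq hE,
      cpow_pos_eq hD, cpow_pos_eq hu0, cpow_pos_eq hu2,
      ofReal_eq_exp (r := (1 - y ^ 2) / (1 + y * u) ^ 2) (by positivity)]
    simp only [← Complex.exp_add]
    congr 1
    rw [Real.log_div (by positivity) (by positivity), Real.log_div (by positivity) (by positivity),
      Real.log_div (by positivity) (by positivity), Real.log_mul (by positivity) (by positivity),
      Real.log_mul (by positivity) (by positivity), Real.log_pow]
    push_cast
    ring
  · rintro u ⟨hu0, hu1⟩
    have hD : 0 < 1 + y * u := by nlinarith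
    have n1 : HasDerivAt (fun u : ℝ => y + u) 1 u := by
      simpa using (hasDerivAt_id u).const_add y
    have n2 : HasDerivAt (fun u : ℝ => 1 + y * u) y u := by
      simpa using ((hasDerivAt_id u).const_mul y).const_add 1
    have := (n1.div n2 hD.ne').hasDerivWithinAt (s := Set.Ioo 0 1)
    refine this.congr_deriv ?_
    congr 1
    ring
  · rintro u ⟨hu0, hu1⟩ v ⟨hv0, hv1⟩ h
    have hD : 0 < 1 + y * u := by nlinarith
    have hD' : 0 < 1 + y * v := by nlinarith
    simp only at h
    rw [div_eq_div_iff hD.ne' hD'.ne'] at h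
    have : (1 - y ^ 2) * (u - v) = 0 := by linear_combination h
    rcases mul_eq_zero.mp this with h' | h'
    · exact absurd h' hE.ne'
    · linarith

lemma GG_int {a c : ℂ} (ha : 0 < a.re) (hc : 0 < c.re) (p : ℂ) {y : ℝ} (h1 : -1 < y) (h2 : y < 1) :
    IntegrableOn (fun u : ℝ => ((1 + y * u : ℝ) : ℂ) ^ p * wt c a u) (Set.Ioo 0 1) := by
  rw [← integrableOn_Icc_iff_integrableOn_Ioo]
  refine IntegrableOn.continuousOn_mul ?_ ?_ isCompact_Icc
  · rintro u ⟨hu0, hu1⟩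
    have hD : 0 < 1 + y * u := by nlinarith
    apply ContinuousAt.continuousWithinAt
    refine ContinuousAt.cpow ?_ continuousAt_const ?_
    · fun_prop
    · left; simpa using hD
  · rw [integrableOn_Icc_iff_integrableOn_Ioo]
    exact wt_integrable hc ha

lemma GG_even {a c : ℂ} (ha : 0 < a.re) (hc : 0 < c.re) {y : ℝ} (h1 : -1 < y) (h2 : y < 1) :
    GG a c y + GG a c (-y) = Complex.betaIntegral c a *
      ∑' n : ℕ, hco (-c + 1/2) (-a - c + 1) (1/2) n * (y : ℂ) ^ (2 * n) := by
  have hy : |y| < 1 := abs_lt.mpr ⟨h1, h2⟩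
  have hyn : ‖(y:ℂ)‖ < 1 := by simpa using hy
  have hca : 0 < (c + a).re := by simp; linarith
  set p : ℂ := 2 * a + 2 * c - 1 with hp
  set k : ℕ → ℂ := fun n => hco (p/2) ((p+1)/2) (1/2) n * (y:ℂ) ^ (2 * n) with hk
  have hks : Summable k := (hasSum_even p hyn).summable
  have hI := interchange hc ha k hks
  rw [GG_eq a c h1 h2, GG_eq a c (y := -y) (by linarith) (by linarith), neg_sq, ← mul_add,
    ← integral_add (GG_int ha hc _ h1 h2) (GG_int ha hc _ (by linarith) (by linarith))]
  have e1 : ∫ u in Set.Ioo (0:ℝ) 1, (((1 + y * u : ℝ) : ℂ) ^ (-p) * wt c a u +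
      ((1 + -y * u : ℝ) : ℂ) ^ (-p) * wt c a u) =
      2 * ∫ u in Set.Ioo (0:ℝ) 1, (∑' n, k n * (u:ℂ) ^ (2 * n)) * wt c a u := by
    rw [← MeasureTheory.integral_const_mul]
    apply setIntegral_congr_fun measurableSet_Ioo
    rintro u ⟨hu0, hu1⟩
    have hz : ‖((y * u : ℝ) : ℂ)‖ < 1 := by
      rw [Complex.norm_real, Real.norm_eq_abs, abs_mul, abs_of_pos hu0]
      nlinarith [abs_nonneg y]
    have h3 := (hasSum_even p hz).tsum_eq
    have h4 : ∑' n, k n * (u:ℂ) ^ (2 * n) =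
        ∑' n, hco (p/2) ((p+1)/2) (1/2) n * ((y * u : ℝ) : ℂ) ^ (2 * n) := by
      congr 1
      funext n
      simp only [hk]
      push_cast
      ring
    simp only
    rw [h4, h3]
    push_cast
    rw [neg_mul, ← sub_eq_add_neg]
    ring
  rw [e1, ← hI.tsum_eq]
  set z : ℂ := (y:ℂ) ^ 2 with hz
  have e2 : ∀ n, k n * (Complex.betaIntegral c a * (poch n c / poch n (c + a)) / 2) =
      (Complex.betaIntegral c a / 2) * (hco (p/2) c (1/2) n * z ^ n) := by
    intro n
    have := poch_ne_zero hca n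
    simp only [hk, hco]
    rw [show (p + 1)/2 = c + a by rw [hp]; ring, hz, ← pow_mul]
    field_simp
  rw [tsum_congr e2, tsum_mul_left]
  have hzn : ‖z‖ < 1 := by
    rw [hz, norm_pow]
    exact pow_lt_one₀ (norm_nonneg _) hyn two_ne_zero
  by_cases hB : Complex.betaIntegral c a = 0
  · simp [hB]
  have hs2 : Summable (fun n => hco (p/2) c (1/2) n * z ^ n) := by
    have := hI.summable
    simp_rw [e2] at this
    exact (summable_mul_left_iff (div_ne_zero hB two_ne_zero)).mp this
  have hP := hasSum_pco (1/2 - p/2 - c) hzn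
  have hcau := tsum_mul_tsum_eq_tsum_sum_antidiagonal_of_summable_norm
    hP.summable.norm hs2.norm
  rw [hP.tsum_eq] at hcau
  have e3 : ((1 - y ^ 2 : ℝ) : ℂ) ^ (a + 2 * c - 1) = (1 - z) ^ (-(1/2 - p/2 - c)) := by
    rw [hz, hp]
    push_cast
    congr 1
    ring
  rw [e3]
  have e4 : ∀ n, ∑ kl ∈ Finset.HasAntidiagonal.antidiagonal n,
      (pco (1/2 - p/2 - c) kl.1 * z ^ kl.1) * (hco (p/2) c (1/2) kl.2 * z ^ kl.2) =
      hco (-c + 1/2) (-a - c + 1) (1/2) n * (y : ℂ) ^ (2 * n) := by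
    intro n
    have := euler_coeff (a := p/2) (b := c) (c := 1/2) (by norm_num) n
    rw [show hco (-c + 1/2) (-a - c + 1) (1/2) n = hco (1/2 - p/2) (1/2 - c) (1/2) n by
      rw [hco, hco, mul_comm, hp]
      congr 3 <;> ring, ← this, Finset.sum_mul]
    apply Finset.sum_congr rfl
    intro kl hkl
    rw [Finset.HasAntidiagonal.mem_antidiagonal] at hkl
    rw [pow_mul, ← hz, ← hkl, pow_add]
    ring
  rw [tsum_congr e4] at hcau
  rw [← hcau]
  ring
lemma posPow_norm_le {c : ℂ} (hc : (1 / 2 : ℝ) < c.re) {y : ℝ} (hy : y ≤ 2) :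
    ‖posPow y (2 * c - 1)‖ ≤ 2 ^ (2 * c.re - 1) := by
  unfold posPow
  split_ifs with h
  · rw [Complex.norm_cpow_eq_rpow_re_of_pos h]
    have : (2 * c - 1).re = 2 * c.re - 1 := by simp
    rw [this]
    exact Real.rpow_le_rpow h.le hy (by linarith)
  · rw [norm_zero]; positivity

lemma posPow_meas (α : ℂ) : Measurable (fun y : ℝ => posPow y α) := by
  unfold posPow
  exact Measurable.ite measurableSet_Ioi (by fun_prop) measurable_const

lemma edge_integrable {a : ℂ} (ha : 0 < a.re) :
    Integrable (fun s : ℝ => ((1 - s ^ 2 : ℝ) : ℂ) ^ (a - 1))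
      (volume.restrict (Set.Ioc (-1:ℝ) 1)) := by
  have h := wt_integrable (c := 1/2) (a := a) (by norm_num) ha
  have h0 : IntervalIntegrable (fun s : ℝ => ((1 - s ^ 2 : ℝ) : ℂ) ^ (a - 1)) volume 0 1 := by
    rw [intervalIntegrable_iff_integrableOn_Ioo_of_le zero_le_one]
    refine h.congr (Filter.Eventually.of_forall fun s => ?_)
    simp [wt]
  have h1 : IntervalIntegrable (fun s : ℝ => ((1 - s ^ 2 : ℝ) : ℂ) ^ (a - 1)) volume (-1) 0 := by
    rw [IntervalIntegrable.iff_comp_neg]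
    simpa using h0.symm
  have := h1.trans h0
  rwa [intervalIntegrable_iff_integrableOn_Ioc_of_le (by norm_num)] at this

theorem stmt3 (a b c : ℂ) (ha : 0 < a.re) (hb : 0 < b.re) (hc : (1 / 2 : ℝ) < c.re)
    (x : ℝ) (hx : -1 ≤ x) (hx' : x ≤ 1) :
    (∫ s in (-1 : ℝ)..1, ∫ t in (-1 : ℝ)..1,
        posPow (s - x * t) (2 * c - 1) * ((1 - s ^ 2 : ℝ) : ℂ) ^ (a - 1) *
          ((1 - t ^ 2 : ℝ) : ℂ) ^ (b - 1)) =
      (Real.sqrt Real.pi : ℂ) * Complex.Gamma a * Complex.Gamma b * Complex.Gamma c /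
          (2 * Complex.Gamma (a + c) * Complex.Gamma (b + 1 / 2)) *
        hyp2F1 (-c + 1 / 2) (-a - c + 1) (b + 1 / 2) ((x : ℂ) ^ 2) := by
  have hc0 : 0 < c.re := by linarith
  have hle : (-1:ℝ) ≤ 1 := by norm_num
  simp_rw [intervalIntegral.integral_of_le hle]
  set μ : Measure ℝ := volume.restrict (Set.Ioc (-1:ℝ) 1) with hμ
  have hint : Integrable (Function.uncurry fun s t : ℝ =>
      posPow (s - x * t) (2 * c - 1) * ((1 - s ^ 2 : ℝ) : ℂ) ^ (a - 1) *
          ((1 - t ^ 2 : ℝ) : ℂ) ^ (b - 1)) (μ.prod μ) := by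
    have h1 := (edge_integrable ha).mul_prod (edge_integrable hb)
    have h2 := Integrable.bdd_mul (c := 2 ^ (2 * c.re - 1))
      (f := fun q : ℝ × ℝ => posPow (q.1 - x * q.2) (2 * c - 1)) h1
      ((posPow_meas _).comp (by fun_prop)).aestronglyMeasurable ?_
    · refine h2.congr (Filter.Eventually.of_forall fun q => ?_)
      simp only [Function.uncurry]
      ring
    · rw [Measure.prod_restrict, ae_restrict_iff' (measurableSet_Ioc.prod measurableSet_Ioc)]
      refine Filter.Eventually.of_forall fun q hq => posPow_norm_le hc ?_
      obtain ⟨⟨p1, p2⟩, p3, p4⟩ := hq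
      have : |x * q.2| ≤ 1 := by
        rw [abs_mul]
        exact mul_le_one₀ (abs_le.mpr ⟨hx, hx'⟩) (abs_nonneg _) (abs_le.mpr ⟨p3.le, p4⟩)
      have := (abs_le.mp this).1
      linarith
  rw [integral_integral_swap hint]
  have hint2 := hint.integral_prod_right
  simp only [Function.uncurry] at hint2
  have e1 : ∀ t : ℝ, ∫ s, posPow (s - x * t) (2 * c - 1) * ((1 - s ^ 2 : ℝ) : ℂ) ^ (a - 1) *
          ((1 - t ^ 2 : ℝ) : ℂ) ^ (b - 1) ∂μ = GG a c (x * t) * ((1 - t ^ 2 : ℝ) : ℂ) ^ (b - 1) := by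
    intro t
    rw [MeasureTheory.integral_mul_const, GG]
  simp_rw [e1] at hint2 ⊢
  set h : ℝ → ℂ := fun t => GG a c (x * t) * ((1 - t ^ 2 : ℝ) : ℂ) ^ (b - 1) with hh
  have hI : IntervalIntegrable h volume (-1) 1 := by
    rw [intervalIntegrable_iff_integrableOn_Ioc_of_le hle]
    exact hint2
  have hI1 : IntervalIntegrable h volume (-1) 0 := hI.mono_set (by
    rw [Set.uIcc_of_le hle, Set.uIcc_of_le (by norm_num)]
    exact Set.Icc_subset_Icc le_rfl (by norm_num))
  have hI2 : IntervalIntegrable h volume 0 1 := hI.mono_set (by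
    rw [Set.uIcc_of_le hle, Set.uIcc_of_le (by norm_num)]
    exact Set.Icc_subset_Icc (by norm_num) le_rfl)
  have hI3 : IntervalIntegrable (fun t => h (-t)) volume 0 1 := by
    have := hI1
    rw [IntervalIntegrable.iff_comp_neg] at this
    simpa using this.symm
  have e2 : ∫ t, h t ∂μ = ∫ t in Set.Ioo (0:ℝ) 1, (h t + h (-t)) := by
    rw [hμ, ← intervalIntegral.integral_of_le hle,
      ← intervalIntegral.integral_add_adjacent_intervals hI1 hI2,
      ← integral_Ioc_eq_integral_Ioo, ← intervalIntegral.integral_of_le zero_le_one,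
      intervalIntegral.integral_add hI2 hI3, add_comm]
    congr 1
    have := intervalIntegral.integral_comp_neg (a := (0:ℝ)) (b := 1) h
    rw [this, neg_zero]
  rw [e2]
  set k : ℕ → ℂ := fun n => hco (-c + 1/2) (-a - c + 1) (1/2) n * (x : ℂ) ^ (2 * n) with hk
  have hxn : ‖(x:ℂ)‖ ≤ 1 := by
    rw [Complex.norm_real]; exact abs_le.mpr ⟨hx, hx'⟩
  have hks : Summable k := by
    have h0 : Summable (hco (-c + 1/2) (-a - c + 1) (1/2)) := by
      apply summable_hco
      simp
      linarith
    refine Summable.of_norm_bounded h0.norm (fun n => ?_)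
    rw [hk, norm_mul, norm_pow]
    exact mul_le_of_le_one_right (norm_nonneg _) (pow_le_one₀ (norm_nonneg _) hxn)
  have hS := interchange (c := 1/2) (a := b) (by norm_num) hb k hks
  have e3 : ∫ t in Set.Ioo (0:ℝ) 1, (h t + h (-t)) = Complex.betaIntegral c a *
      ∫ t in Set.Ioo (0:ℝ) 1, (∑' n, k n * (t:ℂ) ^ (2 * n)) * wt (1/2) b t := by
    rw [← MeasureTheory.integral_const_mul]
    apply setIntegral_congr_fun measurableSet_Ioo
    rintro t ⟨ht0, ht1⟩
    have hy : |x * t| < 1 := by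
      rw [abs_mul, abs_of_pos ht0]
      have : |x| ≤ 1 := abs_le.mpr ⟨hx, hx'⟩
      nlinarith [abs_nonneg x]
    have hg := GG_even ha hc0 (abs_lt.mp hy).1 (abs_lt.mp hy).2
    have h4 : ∑' n, k n * (t:ℂ) ^ (2 * n) =
        ∑' n, hco (-c + 1/2) (-a - c + 1) (1/2) n * ((x * t : ℝ) : ℂ) ^ (2 * n) := by
      congr 1
      funext n
      simp only [hk]
      push_cast
      ring
    simp only [hh]
    rw [h4, mul_neg, neg_sq, ← add_mul, hg, wt]
    simp
    ring
  rw [e3, ← hS.tsum_eq, hyp2F1, beta_eq hc0 ha, beta_eq (by norm_num) hb, ← tsum_mul_left,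
    ← tsum_mul_left]
  congr 1
  funext n
  have hp1 : poch n (1/2) ≠ 0 := poch_ne_zero (by norm_num) n
  have hbh : 0 < (b + 1/2).re := by simp; linarith
  have hp2 : poch n (b + 1/2) ≠ 0 := poch_ne_zero hbh n
  have hg1 : Complex.Gamma (b + 1/2) ≠ 0 := Complex.Gamma_ne_zero_of_re_pos hbh
  have hg2 : Complex.Gamma (a + c) ≠ 0 :=
    Complex.Gamma_ne_zero_of_re_pos (by simp; linarith)
  have h4 : (n.factorial : ℂ) ≠ 0 := by exact_mod_cast Nat.factorial_ne_zero n
  have hpi : Complex.Gamma (1/2) = (Real.sqrt Real.pi : ℂ) := by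
    rw [Complex.Gamma_one_half_eq, Real.sqrt_eq_rpow, Complex.ofReal_cpow Real.pi_pos.le]
    norm_num
  change _ = _ * (poch n (-c + 1/2) * poch n (-a - c + 1) / (poch n (b + 1/2) * _) * _)
  simp only [hk, hco]
  rw [hpi, add_comm (1/2 : ℂ) b, add_comm c a, ← pow_mul]
  field_simp
end
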